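/- arXiv:2012.06358 — 3 statements merged into one kernel-verified Lean document; each statement's English description precedes it below -/
import Mathlib

section
/- Let i, j ≥ 1 and n ≥ i + j be integers. Let N be the number of minimal factorizations f of the (n+1)-cycle (i.e. f ∈ 𝔐_{n+1}) with T_1(f) = i and T_2(f) = j. Then, as an identity in ℚ, (n−1)·N = (n!/(n−i−j)!)·(n−1)^{n−i−j}·[ (i+j−2)(n−1)/((i+j−1)!·(n−i−j+1)) + (i+j−1)/(i!·j!) − (i+j−1)/(i+j)! ]. (Since |𝔐_{n+1}| = (n+1)^{n−1}, this determines the joint law of (T_1, T_2) under the uniform distribution on 𝔐_{n+1}; this is the paper's Theorem 1.1, stated with its cycle-length index made precise.) -/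
/-!
A minimal factorization is a shortest way to write the cycle as a product of transpositions, and
its first transposition `(a b)` cuts the cycle into two disjoint cycles. Give the vertex `1` the
weight `x`, the vertex `2` the weight `y`, every other vertex the weight `1`, and give a
factorization the product of the weights of the vertices moved by its transpositions, so that `f`
has weight `x ^ T_1(f) * y ^ T_2(f)`. Let `minSum π` be the total weight of the minimal
factorizations of `π`, divided by `(norm π)!`, where `norm π` is their length.

Multiplying by a transposition changes `norm` by exactly one, downwards if and only if the two points
lie on the same cycle (`norm_mul_swap_of_sameCycle`, `norm_mul_swap_of_not_sameCycle`). Sorting by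
the first transposition thus gives a recursion for `minSum` (`norm_mul_minSum`), in which only the
transpositions that cut a cycle count. Thanks to the factorial, which absorbs the shuffles of two
factorizations, `minSum` is multiplicative over disjoint permutations (`minSum_mul`), and on the
cycle of a list the recursion becomes a quadratic one over pairs of positions
(`minSum_formPerm_rec`).

The binomial identities of Abel solve this recursion. With a single weighted point of weight `x` on a
cycle of length `n + 1`, `minSum` is the Abel number `abelNum n x = x (x + n) ^ (n - 1) / n!`
(`minSum_one_mark`). With two adjacent weighted points,
`(x - y) * minSum = (x - y) A(x + y - 1) + x (y - 1) A(x - 1) - y (x - 1) A(y - 1)`, where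
`A = abelNum n` (`minSum_two_marks`). Dividing by `x - y` in the polynomial ring and reading off the
coefficient of `x ^ i * y ^ j` (`card_facts`) expresses the number sought through two coefficients
of `(z - 1) (z + n - 1) ^ (n - 1)`, which are explicit (`mul_shiftCoeff`).
-/

/- `τ` is a minimal factorization: every entry is a transposition and the composition
`τ_{k} ∘ ⋯ ∘ τ_1` (rightmost applied first) is the cycle `(1 2 … m)`, i.e. `finRotate m`. -/
def IsMinFact {k m : ℕ} (τ : Fin k → Equiv.Perm (Fin m)) : Prop :=
  (∀ ℓ, (τ ℓ).IsSwap) ∧ (List.ofFn τ).reverse.prod = finRotate m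

/- `T_v`: the number of transpositions of `τ` in which `v` appears. -/
def Tcount {k m : ℕ} (τ : Fin k → Equiv.Perm (Fin m)) (v : Fin m) : ℕ :=
  (Finset.univ.filter fun ℓ => τ ℓ v ≠ v).card

/-! ### The length of a permutation with respect to transpositions -/

namespace MinFact
section Perm
open Equiv Equiv.Perm Finset
set_option linter.unusedSectionVars false
variable {α : Type*} [Fintype α] [DecidableEq α]

/-- The least number of transpositions whose product is `π`, encoded through the cycle type: a cycle
of length `k` contributes `k - 1`. -/
def norm (π : Perm α) : ℕ := (π.cycleType.map (· - 1)).sum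

lemma norm_one : norm (1 : Perm α) = 0 := by simp [norm]

lemma norm_mul {π ρ : Perm α} (h : Disjoint π ρ) : norm (π * ρ) = norm π + norm ρ := by
  simp [norm, h.cycleType_mul]

lemma eq_one_of_norm {π : Perm α} (h : norm π = 0) : π = 1 := by
  rw [← cycleType_eq_zero]
  by_contra hne
  obtain ⟨k, hk⟩ := Multiset.exists_mem_of_ne_zero hne
  have h2 := two_le_of_mem_cycleType hk
  have : k - 1 ≤ norm π := Multiset.single_le_sum (fun _ _ => Nat.zero_le _) _
    (Multiset.mem_map_of_mem _ hk)
  omega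

lemma norm_formPerm {l : List α} (hl : l.Nodup) : norm l.formPerm = l.length - 1 := by
  by_cases h : 2 ≤ l.length
  · have hsup := List.support_formPerm_of_nodup l hl (by rintro x rfl; simp at h)
    rw [norm, (List.isCycle_formPerm hl h).cycleType, hsup, List.toFinset_card_of_nodup hl]
    simp
  · rw [(List.formPerm_eq_one_iff _ hl).2 (by omega), norm_one]; omega

lemma formPerm_disjoint {l l' : List α} (h : l.Disjoint l') :
    Disjoint l.formPerm l'.formPerm := by
  intro x
  by_cases hx : x ∈ l
  · exact Or.inr (List.formPerm_apply_of_notMem fun hx' => h hx hx')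
  · exact Or.inl (List.formPerm_apply_of_notMem hx)

lemma formPerm_append_cons (u : List α) (a : α) (v : List α) :
    (u ++ a :: v).formPerm = (u ++ [a]).formPerm * (a :: v).formPerm := by
  induction u with
  | nil => simp
  | cons c u ih =>
    cases u with
    | nil => simp [List.formPerm_cons_cons]
    | cons d u =>
      simp only [List.cons_append, List.formPerm_cons_cons] at ih ⊢
      rw [ih, mul_assoc]

/-- Conjugating by `(a b)` replaces `b` by `a` in a cycle through `b` but not through `a`. -/
lemma formPerm_conj (a b : α) (w : List α) (ha : a ∉ w) (hb : b ∉ w) :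
    swap a b * (b :: w).formPerm * swap a b = (a :: w).formPerm := by
  cases w with
  | nil => simp
  | cons c w =>
    rw [List.formPerm_cons_cons, List.formPerm_cons_cons]
    have hd : Disjoint (c :: w).formPerm (swap a b) := by
      rw [← List.formPerm_pair]
      apply formPerm_disjoint
      intro x hx hx'
      simp only [List.mem_cons, List.not_mem_nil, or_false] at hx'
      rcases hx' with rfl | rfl
      exacts [ha hx, hb hx]
    rw [mul_assoc, mul_assoc, hd.commute.eq, ← mul_assoc, ← mul_assoc]
    congr 1
    have h1 : a ≠ c := fun h => ha (by simp [h])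
    have h2 : b ≠ c := fun h => hb (by simp [h])
    have := Equiv.swap_apply_apply (swap a b) b c
    rw [swap_apply_right, swap_apply_of_ne_of_ne h1.symm h2.symm, swap_inv] at this
    exact this.symm

/-- Multiplying the cycle `(u a v b w)` on the right by `(a b)` cuts it into the two cycles `(u a w)`
and `(v b)`. -/
lemma formPerm_split (u v w : List α) (a b : α) (h : (u ++ a :: (v ++ b :: w)).Nodup) :
    (u ++ a :: (v ++ b :: w)).formPerm * swap a b =
      (u ++ a :: w).formPerm * (v ++ [b]).formPerm := by
  have h' := (List.nodup_append.1 h).2.1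
  simp only [List.nodup_cons, List.nodup_append, List.mem_append, List.mem_cons] at h'
  have hrot : (a :: (v ++ [b])).formPerm = (v ++ [b]).formPerm * swap a b := by
    have h1 : (a :: (v ++ [b])).Nodup := by
      simp only [List.nodup_cons, List.nodup_append, List.mem_append, List.mem_cons]
      grind
    rw [← List.formPerm_rotate_one _ h1]
    simp only [List.rotate_cons_succ, List.rotate_zero, List.append_assoc, List.cons_append,
      List.nil_append]
    rw [List.formPerm_append_pair, swap_comm]
  have hd : Disjoint (v ++ [b]).formPerm (a :: w).formPerm := by
    apply formPerm_disjoint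
    intro x hx hx'
    simp only [List.mem_append, List.mem_cons, List.not_mem_nil, or_false] at hx hx'
    grind
  rw [formPerm_append_cons u a, ← List.cons_append, formPerm_append_cons (a :: v) b w,
    List.cons_append, hrot, formPerm_append_cons u a w, mul_assoc _ _ (v ++ [b]).formPerm,
    ← hd.commute.eq, ← formPerm_conj a b w (by grind) (by grind)]
  simp only [mul_assoc]

/-- A transposition of two points of one cycle cuts this cycle in two; the case of a single cycle is
`formPerm_split`, applied here to the cycle of `π` through `a`. -/
lemma norm_mul_swap_of_sameCycle {π : Perm α} {a b : α} (hab : a ≠ b) (h : π.SameCycle a b) :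
    norm (π * swap a b) + 1 = norm π := by
  have ha : a ∈ π.support := by
    rw [mem_support]
    intro hfix
    exact hab ((h.eq_of_left hfix))
  have hb : b ∈ π.toList a := mem_toList_iff.2 ⟨h, ha⟩
  have ha' : a ∈ π.toList a := mem_toList_iff.2 ⟨SameCycle.refl _ _, ha⟩
  have hnd := nodup_toList π a
  obtain ⟨t, ht⟩ : ∃ t, π.toList a = a :: t := by
    have h0 := toList_getElem_zero (p := π) (x := a) ha
    cases hl : π.toList a with
    | nil => simp [hl] at ha'
    | cons c t => simp only [hl, List.getElem_cons_zero] at h0; exact ⟨t, by rw [h0]⟩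
  have hbt : b ∈ t := by
    rw [ht] at hb
    exact (List.mem_cons.1 hb).resolve_left hab.symm
  obtain ⟨v, w, rfl⟩ := List.mem_iff_append.1 hbt
  have hfp := formPerm_toList π a
  rw [ht] at hfp hnd
  have hdis := disjoint_mul_inv_of_mem_cycleFactorsFinset
    (cycleOf_mem_cycleFactorsFinset_iff.2 ha)
  rw [← hfp] at hdis
  set c := (a :: (v ++ b :: w)).formPerm with hc
  set ρ := π * c⁻¹ with hρ
  have hπ : π = ρ * c := by simp [hρ]
  clear_value ρ
  have hs := formPerm_split [] v w a b hnd
  simp only [List.nil_append] at hs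
  have hsub : Disjoint ρ (c * swap a b) := by
    refine hdis.mul_right ?_
    rw [disjoint_iff_disjoint_support, support_swap hab]
    have := hdis.disjoint_support
    refine this.mono_right ?_
    have hsup : c.support = (a :: (v ++ b :: w)).toFinset :=
      List.support_formPerm_of_nodup _ hnd (by intro x hx; simp at hx)
    change ({a, b} : Finset α) ⊆ _
    rw [hsup]
    intro x hx
    simp only [Finset.mem_insert, Finset.mem_singleton] at hx
    rcases hx with rfl | rfl <;> simp
  have hnd' := hnd
  simp only [List.nodup_cons, List.nodup_append, List.mem_append, List.mem_cons] at hnd'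
  rw [hπ, mul_assoc, norm_mul hsub, norm_mul hdis, hs, norm_mul, hc, norm_formPerm hnd, norm_formPerm,
    norm_formPerm]
  · simp; omega
  · simp only [List.nodup_append, List.nodup_cons, List.mem_cons]; grind
  · simp only [List.nodup_cons]; grind
  · apply formPerm_disjoint
    intro x hx hx'
    simp only [List.mem_append, List.mem_cons, List.not_mem_nil, or_false] at hx hx'
    grind

/-- A transposition of points of two different cycles merges these cycles: under `π * swap a b`, the
orbit of `a` first runs through the whole `π`-cycle of `b`. -/
lemma sameCycle_mul_swap {π : Perm α} {a b : α} (h : ¬ π.SameCycle a b) :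
    (π * swap a b).SameCycle a b := by
  classical
  have hex : ∃ k, 0 < k ∧ (π ^ k) b = b :=
    ⟨orderOf π, orderOf_pos π, by simp [pow_orderOf_eq_one]⟩
  have hk := Nat.find_spec hex
  have key : ∀ j, j + 1 ≤ Nat.find hex → ((π * swap a b) ^ (j + 1)) a = (π ^ (j + 1)) b := by
    intro j
    induction j with
    | zero => simp
    | succ j ih =>
      intro hj
      rw [pow_succ' _ (j + 1), Perm.mul_apply, ih (by omega), pow_succ' π (j + 1), Perm.mul_apply,
        Perm.mul_apply, swap_apply_of_ne_of_ne]
      · intro he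
        exact h (SameCycle.symm ⟨(j + 1 : ℕ), by rw [zpow_natCast]; exact he⟩)
      · intro he
        exact Nat.find_min hex (show j + 1 < _ by omega) ⟨by omega, he⟩
  refine ⟨(Nat.find hex : ℕ), ?_⟩
  have := key (Nat.find hex - 1) (by omega)
  rw [show Nat.find hex - 1 + 1 = Nat.find hex by omega] at this
  rw [zpow_natCast, this, hk.2]

lemma norm_mul_swap_of_not_sameCycle {π : Perm α} {a b : α} (h : ¬ π.SameCycle a b) :
    norm (π * swap a b) = norm π + 1 := by
  have hab : a ≠ b := by rintro rfl; exact h (SameCycle.refl _ _)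
  have := norm_mul_swap_of_sameCycle hab (sameCycle_mul_swap h)
  rw [mul_assoc, swap_mul_self, mul_one] at this
  exact this.symm

/-! ### Weighted counts of factorizations -/

open Classical in
variable (α) in
/-- The set of transpositions of `α`. -/
noncomputable def swaps : Finset (Perm α) := univ.filter IsSwap

lemma mem_swaps {t : Perm α} : t ∈ swaps α ↔ t.IsSwap := by simp [swaps]

/-- The weight of a transposition `(a b)`, namely `x a * x b`, written as a product over the support. -/
noncomputable def wt (x : α → ℚ) (t : Perm α) : ℚ := ∏ v ∈ t.support, x v

/-- The total weight of the sequences `(τ_1, …, τ_k)` of transpositions with `τ_k ∘ ⋯ ∘ τ_1 = π`,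
defined by recursion on `k` through the choice of `τ_1` (see `sum_fact_eq_factSum`). -/
noncomputable def factSum (x : α → ℚ) : ℕ → Perm α → ℚ
  | 0, π => if π = 1 then 1 else 0
  | k + 1, π => ∑ t ∈ swaps α, wt x t * factSum x k (π * t)

lemma norm_mul_swap_cases (π : Perm α) {t : Perm α} (ht : t.IsSwap) :
    norm (π * t) + 1 = norm π ∨ norm (π * t) = norm π + 1 := by
  obtain ⟨a, b, hab, rfl⟩ := ht
  by_cases h : π.SameCycle a b
  · exact Or.inl (norm_mul_swap_of_sameCycle hab h)
  · exact Or.inr (norm_mul_swap_of_not_sameCycle h)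

lemma factSum_eq_zero (x : α → ℚ) (k : ℕ) (π : Perm α) (h : k < norm π) : factSum x k π = 0 := by
  induction k generalizing π with
  | zero =>
    have : π ≠ 1 := by rintro rfl; simp [norm_one] at h
    simp [factSum, this]
  | succ k ih =>
    refine Finset.sum_eq_zero fun t ht => ?_
    have := norm_mul_swap_cases π (mem_swaps.1 ht)
    rw [ih _ (by omega), mul_zero]

/-- The total weight of the minimal factorizations of `π`, divided by the factorial of their length. -/
noncomputable def minSum (x : α → ℚ) (π : Perm α) : ℚ :=
  factSum x (norm π) π / (norm π).factorial

/-- The transpositions that can come first in a minimal factorization of `π`: those that decrease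
`norm`, i.e. (`swap_mem_splitters`) those whose two points lie on one cycle of `π`. -/
noncomputable def splitters (π : Perm α) : Finset (Perm α) :=
  (swaps α).filter fun t => norm (π * t) + 1 = norm π

lemma swap_mem_splitters {π : Perm α} {a b : α} (hab : a ≠ b) :
    swap a b ∈ splitters π ↔ π.SameCycle a b := by
  simp only [splitters, Finset.mem_filter, mem_swaps, swap_isSwap_iff, ne_eq, hab,
    not_false_eq_true, true_and]
  refine ⟨fun h => ?_, norm_mul_swap_of_sameCycle hab⟩
  by_contra hn
  have := norm_mul_swap_of_not_sameCycle hn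
  omega

/-- The recursion for `minSum` given by the first transposition; transpositions which do not decrease
`norm` contribute nothing, by `factSum_eq_zero`. -/
lemma norm_mul_minSum (x : α → ℚ) (π : Perm α) :
    (norm π : ℚ) * minSum x π = ∑ t ∈ splitters π, wt x t * minSum x (π * t) := by
  rcases hk : norm π with _ | k
  · simp [splitters, hk]
  · have h1 : factSum x (k + 1) π = ∑ t ∈ splitters π, wt x t * factSum x k (π * t) := by
      rw [factSum, splitters]
      symm
      refine Finset.sum_subset (Finset.filter_subset _ _) fun t ht hnt => ?_
      have := norm_mul_swap_cases π (mem_swaps.1 ht)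
      simp only [Finset.mem_filter, ht, true_and] at hnt
      rw [factSum_eq_zero x k _ (by omega), mul_zero]
    have hpos : ((k.factorial : ℕ) : ℚ) ≠ 0 := by exact_mod_cast k.factorial_ne_zero
    have hk1 : ((k + 1 : ℕ) : ℚ) ≠ 0 := by exact_mod_cast k.succ_ne_zero
    rw [minSum, hk, h1, Nat.factorial_succ, Nat.cast_mul, mul_div_assoc', mul_div_mul_left _ _ hk1,
      Finset.sum_div]
    refine Finset.sum_congr rfl fun t ht => ?_
    have ht' : norm (π * t) = k := by
      have := (Finset.mem_filter.1 ht).2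
      omega
    rw [minSum, ht', mul_div_assoc]

lemma minSum_one (x : α → ℚ) : minSum x (1 : Perm α) = 1 := by
  simp [minSum, norm_one, factSum]

lemma mem_support_of_sameCycle {π : Perm α} {a b : α} (hab : a ≠ b) (h : π.SameCycle a b) :
    a ∈ π.support ∧ b ∈ π.support := by
  simp only [mem_support]
  exact ⟨fun hfix => hab (h.eq_of_left hfix), fun hfix => hab (h.eq_of_right hfix)⟩

lemma support_of_mem_splitters {π t : Perm α} (h : t ∈ splitters π) : t.support ⊆ π.support := by
  obtain ⟨a, b, hab, rfl⟩ := mem_swaps.1 (Finset.mem_filter.1 h).1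
  have := mem_support_of_sameCycle hab ((swap_mem_splitters hab).1 h)
  rw [support_swap hab]
  intro x hx
  simp only [Finset.mem_insert, Finset.mem_singleton] at hx
  rcases hx with rfl | rfl
  exacts [this.1, this.2]

lemma sameCycle_mul_of_left {π ρ : Perm α} (hd : Disjoint π ρ) {a b : α} (ha : a ∈ π.support) :
    (π * ρ).SameCycle a b ↔ π.SameCycle a b := by
  have key : ∀ n : ℤ, ((π * ρ) ^ n) a = (π ^ n) a := by
    intro n
    have h : ρ a = a := by simpa using hd.mem_imp ha
    rw [hd.commute.mul_zpow, Perm.mul_apply, zpow_apply_eq_self_of_apply_eq_self h n]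
  simp only [SameCycle, key]

lemma splitters_mul {π ρ : Perm α} (hd : Disjoint π ρ) :
    splitters (π * ρ) = splitters π ∪ splitters ρ := by
  ext t
  by_cases ht : t.IsSwap
  swap
  · simp [splitters, mem_swaps, ht]
  obtain ⟨a, b, hab, rfl⟩ := ht
  simp only [Finset.mem_union, swap_mem_splitters hab]
  constructor
  · intro h
    have ha := (mem_support_of_sameCycle hab h).1
    rw [hd.support_mul, Finset.mem_union] at ha
    rcases ha with ha | ha
    · exact Or.inl ((sameCycle_mul_of_left hd ha).1 h)
    · rw [hd.commute.eq] at h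
      exact Or.inr ((sameCycle_mul_of_left hd.symm ha).1 h)
  · rintro (h | h)
    · exact (sameCycle_mul_of_left hd (mem_support_of_sameCycle hab h).1).2 h
    · rw [hd.commute.eq]
      exact (sameCycle_mul_of_left hd.symm (mem_support_of_sameCycle hab h).1).2 h

lemma disjoint_splitters {π ρ : Perm α} (hd : Disjoint π ρ) :
    _root_.Disjoint (splitters π) (splitters ρ) := by
  rw [Finset.disjoint_left]
  intro t h1 h2
  obtain ⟨a, b, hab, rfl⟩ := mem_swaps.1 (Finset.mem_filter.1 h1).1
  exact hd.mem_imp (mem_support_of_sameCycle hab ((swap_mem_splitters hab).1 h1)).1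
    (mem_support_of_sameCycle hab ((swap_mem_splitters hab).1 h2)).1

lemma disjoint_of_mem_splitters {π ρ t : Perm α} (hd : Disjoint π ρ) (ht : t ∈ splitters π) :
    Disjoint t ρ :=
  hd.mono (support_of_mem_splitters ht) le_rfl

/-- Multiplicativity: a minimal factorization of `π * ρ` is a shuffle of minimal factorizations of `π`
and `ρ`, and the factorials in `minSum` account for the number of shuffles. The proof is by induction
on the total length, using `norm_mul_minSum` on both sides. -/
lemma minSum_mul (x : α → ℚ) {π ρ : Perm α} (hd : Disjoint π ρ) :
    minSum x (π * ρ) = minSum x π * minSum x ρ := by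
  obtain ⟨k, hk⟩ : ∃ k, norm π + norm ρ = k := ⟨_, rfl⟩
  induction k generalizing π ρ with
  | zero =>
    rw [eq_one_of_norm (π := π) (by omega), eq_one_of_norm (π := ρ) (by omega)]
    simp [minSum_one]
  | succ k ih =>
    have hne : ((norm π + norm ρ : ℕ) : ℚ) ≠ 0 := by rw [hk]; exact_mod_cast k.succ_ne_zero
    apply mul_left_cancel₀ hne
    have e := norm_mul_minSum x (π * ρ)
    rw [norm_mul hd, splitters_mul hd, Finset.sum_union (disjoint_splitters hd)] at e
    rw [e]
    have e1 : ∑ t ∈ splitters π, wt x t * minSum x (π * ρ * t) =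
        (∑ t ∈ splitters π, wt x t * minSum x (π * t)) * minSum x ρ := by
      rw [Finset.sum_mul]
      refine Finset.sum_congr rfl fun t ht => ?_
      have hdt := disjoint_of_mem_splitters hd ht
      have hn := (Finset.mem_filter.1 ht).2
      rw [mul_assoc π, ← hdt.commute.eq, ← mul_assoc, ih (hd.mul_left hdt) (by omega), mul_assoc]
    have e2 : ∑ t ∈ splitters ρ, wt x t * minSum x (π * ρ * t) =
        minSum x π * (∑ t ∈ splitters ρ, wt x t * minSum x (ρ * t)) := by
      rw [Finset.mul_sum]
      refine Finset.sum_congr rfl fun t ht => ?_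
      have hdt := disjoint_of_mem_splitters hd.symm ht
      have hn := (Finset.mem_filter.1 ht).2
      rw [mul_assoc π, ih (hd.mul_right hdt.symm) (by omega)]
      ring
    rw [e1, e2, ← norm_mul_minSum, ← norm_mul_minSum]
    push_cast
    ring

/-- The recursion `norm_mul_minSum` on the cycle of a list `l`: the transposition exchanges the entries
at positions `p` and `p + s + 1`, and cuts out the cycle of the `s + 1` entries at positions
`p + 1, …, p + s + 1`. -/
lemma minSum_formPerm_rec (x : α → ℚ) (l : List α) (hl : l.Nodup) :
    ((l.length - 1 : ℕ) : ℚ) * minSum x l.formPerm =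
      ∑ s ∈ range (l.length - 1), ∑ p ∈ range (l.length - 1 - s),
        (l.map x).getD p 0 * (l.map x).getD (p + s + 1) 0 *
        (minSum x (l.take (p + 1) ++ l.drop (p + s + 2)).formPerm *
          minSum x ((l.drop (p + 1)).take (s + 1)).formPerm) := by
  rw [← norm_formPerm hl, norm_mul_minSum, norm_formPerm hl]
  symm
  by_cases hlen : l.length ≤ 1
  · have h1 : l.length - 1 = 0 := by omega
    rw [(List.formPerm_eq_one_iff _ hl).2 hlen]
    simp [h1, splitters, norm_one]
  rw [Finset.sum_sigma']
  -- the cut made by the transposition of the entries at positions `p` and `p + s + 1`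
  have key : ∀ p s (hps : p + s + 1 < l.length),
      l.formPerm * swap (l[p]'(by omega)) l[p + s + 1] =
        (l.take (p + 1) ++ l.drop (p + s + 2)).formPerm *
          ((l.drop (p + 1)).take (s + 1)).formPerm ∧
      Disjoint (l.take (p + 1) ++ l.drop (p + s + 2)).formPerm
          ((l.drop (p + 1)).take (s + 1)).formPerm ∧
      l[p]'(by omega) ≠ l[p + s + 1] ∧
      swap (l[p]'(by omega)) l[p + s + 1] ∈ splitters l.formPerm := by
    intro p s hps
    have hsplit : l = l.take p ++ (l[p]'(by omega)) ::
        ((l.drop (p + 1)).take s ++ l[p + s + 1] :: l.drop (p + s + 2)) := by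
      conv_lhs => rw [← List.take_append_drop p l, ← List.cons_getElem_drop_succ (h := by omega),
        ← List.take_append_drop s (l.drop (p + 1)), List.drop_drop,
        show p + 1 + s = p + s + 1 by omega, ← List.cons_getElem_drop_succ (h := hps)]
    have hA : l.take (p + 1) ++ l.drop (p + s + 2) =
        l.take p ++ (l[p]'(by omega)) :: l.drop (p + s + 2) := by
      rw [← List.take_concat_get' l p (by omega), List.append_assoc]
      rfl
    have hB : (l.drop (p + 1)).take (s + 1) = (l.drop (p + 1)).take s ++ [l[p + s + 1]] := by
      rw [← List.take_concat_get' (l.drop (p + 1)) s (by simp; omega)]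
      simp [show p + 1 + s = p + s + 1 by omega]
    have hne : l[p]'(by omega) ≠ l[p + s + 1] := by
      intro h
      have := (hl.getElem_inj_iff).1 h
      omega
    have hnd := hl
    rw [hsplit] at hnd
    have hid := formPerm_split _ _ _ _ _ hnd
    rw [← hsplit, ← hA, ← hB] at hid
    refine ⟨hid, ?_, hne, ?_⟩
    · rw [hA, hB]
      apply formPerm_disjoint
      intro y hy hy'
      simp only [List.nodup_cons, List.nodup_append, List.mem_append, List.mem_cons,
        List.not_mem_nil, or_false] at hnd hy hy'
      grind
    · rw [swap_mem_splitters hne]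
      exact (List.isCycle_formPerm hl (by omega)).sameCycle
        ((List.formPerm_apply_mem_ne_self_iff _ hl _ (List.getElem_mem _)).2 (by omega))
        ((List.formPerm_apply_mem_ne_self_iff _ hl _ (List.getElem_mem _)).2 (by omega))
  have hb : ∀ q ∈ (range (l.length - 1)).sigma fun s => range (l.length - 1 - s),
      q.2 + q.1 + 1 < l.length := by
    intro q hq
    simp only [Finset.mem_sigma, Finset.mem_range] at hq
    omega
  refine Finset.sum_bij
    (fun q hq => swap (l[q.2]'(by have := hb q hq; omega)) (l[q.2 + q.1 + 1]'(hb q hq)))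
    ?_ ?_ ?_ ?_
  · intro q hq
    exact (key q.2 q.1 (hb q hq)).2.2.2
  · rintro ⟨s, p⟩ hq ⟨s', p'⟩ hq' he
    have h1 := hb _ hq
    have h2 := hb _ hq'
    have hs := congrArg Perm.support he
    simp only at h1 h2 hs
    rw [support_swap (key p s h1).2.2.1, support_swap (key p' s' h2).2.2.1] at hs
    have ha : l[p] ∈ ({l[p'], l[p' + s' + 1]} : Finset α) := by rw [← hs]; simp
    have hb : l[p + s + 1] ∈ ({l[p'], l[p' + s' + 1]} : Finset α) := by rw [← hs]; simp
    simp only [Finset.mem_insert, Finset.mem_singleton, hl.getElem_inj_iff] at ha hb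
    have hp : p = p' := by omega
    have hs : s = s' := by omega
    rw [hp, hs]
  · intro t ht
    obtain ⟨a, b, hab, rfl⟩ := mem_swaps.1 (Finset.mem_filter.1 ht).1
    have hsc := mem_support_of_sameCycle hab ((swap_mem_splitters hab).1 ht)
    have ha : a ∈ l := List.mem_of_formPerm_apply_ne (mem_support.1 hsc.1)
    have hb' : b ∈ l := List.mem_of_formPerm_apply_ne (mem_support.1 hsc.2)
    obtain ⟨p, hp, rfl⟩ := List.mem_iff_getElem.1 ha
    obtain ⟨q, hq, rfl⟩ := List.mem_iff_getElem.1 hb'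
    rcases lt_trichotomy p q with h | h | h
    · refine ⟨⟨q - p - 1, p⟩, by simp; omega, ?_⟩
      simp only [show p + (q - p - 1) + 1 = q by omega]
    · subst h; exact absurd rfl hab
    · refine ⟨⟨p - q - 1, q⟩, by simp; omega, ?_⟩
      simp only [show q + (p - q - 1) + 1 = p by omega]
      exact swap_comm _ _
  · rintro ⟨s, p⟩ hq
    have h1 := hb _ hq
    simp only at h1
    obtain ⟨k1, k2, k3, -⟩ := key p s h1
    have hwt : wt x (swap l[p] l[p + s + 1]) = x l[p] * x l[p + s + 1] := by
      rw [wt, support_swap k3, Finset.prod_pair k3]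
    simp only [k1, minSum_mul x k2, hwt]
    congr 2 <;> rw [List.getD_eq_getElem _ _ (by simp; omega), List.getElem_map]

end Perm

/-! ### Abel polynomials -/

section Abel
open Finset Polynomial

/-- The Abel polynomial `X (X + n) ^ (n - 1) / n!`, equal to `1` for `n = 0`. -/
noncomputable def abelPoly : ℕ → ℚ[X]
  | 0 => 1
  | n + 1 => C (1 / ((n + 1).factorial : ℚ)) * (X * (X + C ((n : ℚ) + 1)) ^ n)

/-- The polynomial `(X + n) ^ n / n!`. -/
noncomputable def powPoly (n : ℕ) : ℚ[X] := C (1 / (n.factorial : ℚ)) * (X + C (n : ℚ)) ^ n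

lemma derivative_abelPoly (n : ℕ) :
    derivative (abelPoly (n + 1)) = (abelPoly n).comp (X + 1) := by
  cases n with
  | zero => simp [abelPoly]
  | succ n =>
    have h1 : ((n + 1 + 1).factorial : ℚ) = ((n : ℚ) + 2) * ((n + 1).factorial : ℚ) := by
      rw [Nat.factorial_succ (n + 1)]; push_cast; ring
    have h2 : ((n + 1).factorial : ℚ) ≠ 0 := by exact_mod_cast Nat.factorial_ne_zero _
    have h3 : (n : ℚ) + 2 ≠ 0 := by positivity
    apply Polynomial.funext
    intro y
    simp only [abelPoly, derivative_mul, derivative_C, derivative_X_add_C_pow, derivative_X,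
      eval_add, eval_mul, eval_C, eval_X, eval_pow, eval_comp, eval_one, eval_zero, h1]
    push_cast
    simp
    field_simp
    ring

lemma derivative_powPoly (n : ℕ) :
    derivative (powPoly (n + 1)) = (powPoly n).comp (X + 1) := by
  have h1 : ((n + 1).factorial : ℚ) = ((n : ℚ) + 1) * (n.factorial : ℚ) := by
    rw [Nat.factorial_succ]; push_cast; ring
  have h2 : (n.factorial : ℚ) ≠ 0 := by exact_mod_cast Nat.factorial_ne_zero _
  have h3 : (n : ℚ) + 1 ≠ 0 := by positivity
  apply Polynomial.funext
  intro y
  simp only [powPoly, derivative_mul, derivative_C, derivative_X_add_C_pow,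
    eval_add, eval_mul, eval_C, eval_X, eval_pow, eval_comp, eval_one, eval_zero, h1]
  push_cast
  simp
  field_simp
  ring

lemma abelPoly_eval_zero (n : ℕ) : (abelPoly (n + 1)).eval 0 = 0 := by simp [abelPoly]

lemma eq_of_derivative_eq {G H : ℚ[X]} (h : derivative G = derivative H)
    (h0 : G.eval 0 = H.eval 0) : G = H := by
  have h1 : derivative (G - H) = 0 := by rw [derivative_sub, h, sub_self]
  have h2 := eq_C_of_natDegree_eq_zero (derivative_eq_zero.1 h1)
  have h3 : (G - H).eval 0 = 0 := by rw [eval_sub, h0, sub_self]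
  rw [h2, eval_C] at h3
  rw [h3, C_0] at h2
  exact sub_eq_zero.1 h2

/-- The binomial identity of Abel, for any sequence `F` of polynomials with `F_0` constant and
`(d/dz) F_{n+1}(z) = F_n(z + 1)`. Both sides, as polynomials in `c`, have the same derivative by
induction, and agree at `c = 0`. -/
lemma abel_convolution (F : ℕ → ℚ[X]) (h0 : derivative (F 0) = 0)
    (hF : ∀ n, derivative (F (n + 1)) = (F n).comp (X + 1)) (M : ℕ) (a c : ℚ) :
    ∑ s ∈ range (M + 1), (F (M - s)).eval a * (abelPoly s).eval c = (F M).eval (a + c) := by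
  induction M generalizing c with
  | zero =>
    have := eq_C_of_natDegree_eq_zero (derivative_eq_zero.1 h0)
    rw [zero_add, sum_range_one, this]
    simp [abelPoly]
  | succ M ih =>
    have key : ∑ s ∈ range (M + 2), C ((F (M + 1 - s)).eval a) * abelPoly s =
        (F (M + 1)).comp (X + C a) := by
      apply eq_of_derivative_eq
      · rw [derivative_sum, sum_range_succ']
        apply Polynomial.funext
        intro y
        rw [derivative_comp, hF]
        have := ih (y + 1)
        simp only [derivative_C_mul, derivative_abelPoly, eval_add, eval_mul, eval_C, eval_comp,
          eval_X, eval_one, eval_finsetSum, derivative_add, derivative_X, derivative_C,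
          Nat.add_sub_add_right, this]
        simp [abelPoly]
        ring_nf
      · rw [sum_range_succ']
        simp only [eval_add, eval_finsetSum, eval_mul, eval_C, abelPoly_eval_zero, mul_zero,
          sum_const_zero, eval_comp, eval_X]
        simp [abelPoly]
    have := congrArg (eval c) key
    simpa [eval_finsetSum, eval_comp, add_comm c a] using this

/-- The value `a (a + n) ^ (n - 1) / n!` of the `n`-th Abel polynomial at `a`. -/
noncomputable def abelNum (n : ℕ) (a : ℚ) : ℚ := (abelPoly n).eval a

lemma abelNum_zero (a : ℚ) : abelNum 0 a = 1 := by simp [abelNum, abelPoly]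

lemma abelNum_succ (n : ℕ) (a : ℚ) :
    abelNum (n + 1) a = a * (a + n + 1) ^ n / ((n + 1).factorial : ℚ) := by
  simp [abelNum, abelPoly]; ring

lemma abelNum_conv (M : ℕ) (a c : ℚ) :
    ∑ s ∈ range (M + 1), abelNum (M - s) a * abelNum s c = abelNum M (a + c) :=
  abel_convolution abelPoly (by simp [abelPoly]) derivative_abelPoly M a c

/-- The recursion satisfied by `minSum` on cycles with a single weighted point. -/
lemma abelNum_rec (M : ℕ) (a : ℚ) :
    ∑ s ∈ range (M + 1), (a + ((M - s : ℕ) : ℚ)) * abelNum (M - s) a * abelNum s 1 =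
      (M + 1) * abelNum (M + 1) a := by
  have h := abel_convolution powPoly (by simp [powPoly]) derivative_powPoly M a 1
  have h1 : ∀ l : ℕ, (a + (l : ℚ)) * abelNum l a = a * (powPoly l).eval a := by
    intro l
    cases l with
    | zero => simp [abelNum_zero, powPoly]
    | succ l => rw [abelNum_succ]; simp [powPoly]; ring
  simp only [h1, mul_assoc]
  rw [← mul_sum]
  change a * ∑ s ∈ range (M + 1), (powPoly (M - s)).eval a * (abelPoly s).eval 1 = _
  rw [h, abelNum_succ, Nat.factorial_succ]
  have h2 : (M.factorial : ℚ) ≠ 0 := by exact_mod_cast Nat.factorial_ne_zero _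
  have h3 : (M : ℚ) + 1 ≠ 0 := by positivity
  simp [powPoly]
  field_simp
  ring

/-- A variant of `abelNum_rec`, used for cycles with two weighted points. -/
lemma abelNum_rec' (k : ℕ) (a y : ℚ) :
    ∑ s ∈ range (k + 1), (y + ((k - s : ℕ) : ℚ) - 1) * abelNum (k - s) (a - 1) * abelNum s 1 =
      (k + 1) * abelNum (k + 1) (a - 1) - (a - y) * abelNum k a := by
  have h1 := abelNum_rec k (a - 1)
  have h2 := abelNum_conv k (a - 1) 1
  rw [sub_add_cancel] at h2
  rw [← h1, ← h2, mul_sum, ← sum_sub_distrib]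
  exact sum_congr rfl fun s _ => by ring

end Abel

/-! ### Cycles with one or two weighted points -/

section Marks
open Equiv Equiv.Perm Finset
variable {α : Type*} [Fintype α] [DecidableEq α]

set_option linter.unusedSectionVars false

lemma getD_map_one {x : α → ℚ} {t : List α} (h : ∀ v ∈ t, x v = 1) {k : ℕ} (hk : k < t.length) :
    (t.map x).getD k 0 = 1 := by
  rw [List.getD_eq_getElem _ _ (by simpa using hk), List.getElem_map]
  exact h _ (List.getElem_mem _)

lemma take_append_drop_sublist (t : List α) (p s : ℕ) :
    (t.take p ++ t.drop (p + s + 1)).Sublist t := by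
  conv_rhs => rw [← List.take_append_drop p t]
  exact List.Sublist.append_left (List.drop_sublist_drop_left _ (by omega)) _

/-- On a cycle of length `n + 1` where all points but `c` have weight `1`, `minSum` is an Abel number.
In the recursion, the piece cut out never contains `c`, which is the first entry of the list. -/
lemma minSum_one_mark (x : α → ℚ) (n : ℕ) : ∀ (c : α) (t : List α), t.length = n →
    (c :: t).Nodup → (∀ v ∈ t, x v = 1) → minSum x (c :: t).formPerm = abelNum n (x c) := by
  induction n using Nat.strong_induction_on with
  | _ n ih =>
  intro c t hlen hnd hx
  rcases n with _ | M
  · rw [List.length_eq_zero_iff.1 hlen, List.formPerm_singleton, minSum_one, abelNum_zero]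
  have hne : ((M : ℚ) + 1) ≠ 0 := by positivity
  apply mul_left_cancel₀ hne
  have hrec := minSum_formPerm_rec x (c :: t) hnd
  simp only [List.length_cons, hlen, Nat.add_sub_cancel, List.take_succ_cons, List.drop_succ_cons,
    List.map_cons, List.getD_cons_succ, List.cons_append] at hrec
  push_cast at hrec
  rw [hrec, ← abelNum_rec]
  refine sum_congr rfl fun s hs => ?_
  have hs' : s < M + 1 := mem_range.1 hs
  have hnd' := List.nodup_cons.1 hnd
  have hAB : ∀ p ∈ range (M + 1 - s),
      minSum x (c :: (t.take p ++ t.drop (p + s + 1))).formPerm *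
        minSum x ((t.drop p).take (s + 1)).formPerm = abelNum (M - s) (x c) * abelNum s 1 := by
    intro p hp
    have hp' : p < M + 1 - s := mem_range.1 hp
    congr 1
    · have hsub := take_append_drop_sublist t p s
      exact ih (M - s) (by omega) c _ (by simp; omega) (hnd.sublist (hsub.cons_cons c))
        fun v hv => hx v (hsub.subset hv)
    · have hsub : ((t.drop p).take (s + 1)).Sublist t :=
        (List.take_sublist _ _).trans (List.drop_sublist _ _)
      have hl : ((t.drop p).take (s + 1)).length = s + 1 := by simp; omega
      rcases hd : (t.drop p).take (s + 1) with _ | ⟨d, r⟩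
      · simp [hd] at hl
      · rw [hd] at hl hsub
        rw [ih s hs' d r (by simpa using hl) (hnd'.2.sublist hsub)
          (fun v hv => hx v (hsub.subset (by simp [hv]))), hx d (hsub.subset (by simp))]
  rw [sum_congr rfl fun p hp => by rw [hAB p hp], ← sum_mul,
    show M + 1 - s = (M - s) + 1 by omega, sum_range_succ']
  have h1 : ∀ p ∈ range (M - s), (x c :: t.map x).getD (p + 1) 0 * (t.map x).getD (p + 1 + s) 0 = 1 := by
    intro p hp
    have := mem_range.1 hp
    rw [List.getD_cons_succ, getD_map_one hx (by omega), getD_map_one hx (by omega), one_mul]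
  rw [sum_congr rfl h1, List.getD_cons_zero, getD_map_one hx (by omega)]
  simp
  ring

/-- The closed form of `(x - y) * minSum` on a cycle of length `n + 1 ≥ 2` with two adjacent points of
weights `x` and `y`, all others having weight `1` (see `minSum_two_marks`). -/
noncomputable def pairNum (n : ℕ) (x y : ℚ) : ℚ :=
  (x - y) * abelNum n (x + y - 1) + x * (y - 1) * abelNum n (x - 1) -
    y * (x - 1) * abelNum n (y - 1)

/-- The recursion satisfied by `(x - y) * minSum` on cycles with two adjacent weighted points. -/
lemma pairNum_rec (k : ℕ) (x y : ℚ) :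
    (x - y) * (x * abelNum k (x + y) + x * (y - 1) * abelNum k x) +
      ∑ s ∈ range (k + 1), (y + ((k - s : ℕ) : ℚ) - 1) * pairNum (k - s) x y * abelNum s 1 =
      (k + 1) * pairNum (k + 1) x y := by
  have h1 := abelNum_rec' k (x + y) y
  have h2 := abelNum_rec' k x y
  have h3 := abelNum_rec' k y y
  have e : ∑ s ∈ range (k + 1), (y + ((k - s : ℕ) : ℚ) - 1) * pairNum (k - s) x y * abelNum s 1 =
      (x - y) * ((k + 1) * abelNum (k + 1) (x + y - 1) - (x + y - y) * abelNum k (x + y)) +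
      x * (y - 1) * ((k + 1) * abelNum (k + 1) (x - 1) - (x - y) * abelNum k x) -
      y * (x - 1) * ((k + 1) * abelNum (k + 1) (y - 1) - (y - y) * abelNum k y) := by
    rw [← h1, ← h2, ← h3, mul_sum, mul_sum, mul_sum, ← sum_add_distrib, ← sum_sub_distrib]
    refine sum_congr rfl fun s _ => ?_
    rw [pairNum]
    ring
  rw [e, pairNum]
  ring

/-- On a cycle where all points but the adjacent points `c`, `d` have weight `1`, `minSum` times
`x c - x d` equals `pairNum`. In the recursion, the piece cut out starts with `d` if the
transposition contains `c` (`p = 0`), and otherwise contains neither `c` nor `d`. -/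
lemma minSum_two_marks (x : α → ℚ) (k : ℕ) : ∀ (c d : α) (t : List α), t.length = k →
    (c :: d :: t).Nodup → (∀ v ∈ t, x v = 1) →
    (x c - x d) * minSum x (c :: d :: t).formPerm = pairNum (k + 1) (x c) (x d) := by
  induction k using Nat.strong_induction_on with
  | _ k ih =>
  intro c d t hlen hnd hx
  have hne : ((k : ℚ) + 1) ≠ 0 := by positivity
  apply mul_left_cancel₀ hne
  have hrec := minSum_formPerm_rec x (c :: d :: t) hnd
  simp only [List.length_cons, hlen, Nat.add_sub_cancel, List.take_succ_cons, List.drop_succ_cons,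
    List.map_cons, List.getD_cons_succ, List.cons_append] at hrec
  push_cast at hrec
  rw [mul_left_comm, hrec, ← pairNum_rec, ← abelNum_conv, mul_add, mul_sum, mul_sum, mul_sum]
  have hndd := (List.nodup_cons.1 hnd).2
  have hndt := (List.nodup_cons.1 hndd).2
  -- For `p = 0` the weights `x c` and `x d` are separated, which gives the first summand; the second
  -- one corrects for `s = 0`, where the transposition is `(c d)` and carries the factor `x d`, not `1`.
  -- The third summand collects the terms with `p ≥ 1`.
  have hterm : ∀ s ∈ range (k + 1),
      (x c - x d) * ∑ p ∈ range (k + 1 - s),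
        (x c :: x d :: t.map x).getD p 0 * (x d :: t.map x).getD (p + s) 0 *
        (minSum x (c :: ((d :: t).take p ++ t.drop (p + s))).formPerm *
          minSum x (((d :: t).drop p).take (s + 1)).formPerm) =
      (x c - x d) * (x c * (abelNum (k - s) (x c) * abelNum s (x d))) +
      (x c - x d) * (x c * (if s = 0 then (x d - 1) * abelNum k (x c) else 0)) +
      (x d + ((k - s : ℕ) : ℚ) - 1) * pairNum (k - s) (x c) (x d) * abelNum s 1 := by
    intro s hs
    have hs' : s < k + 1 := mem_range.1 hs
    have h0 : minSum x (c :: t.drop s).formPerm = abelNum (k - s) (x c) :=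
      minSum_one_mark x (k - s) c _ (by simp [hlen])
        (hnd.sublist (((List.drop_sublist s t).trans (List.sublist_cons_self d t)).cons_cons c))
        fun v hv => hx v (List.mem_of_mem_drop hv)
    have h0' : minSum x (d :: t.take s).formPerm = abelNum s (x d) :=
      minSum_one_mark x s d _ (by simp; omega) (hndd.sublist ((List.take_sublist s t).cons_cons d))
        fun v hv => hx v (List.mem_of_mem_take hv)
    have h1 : ∀ p ∈ range (k - s),
        (x c - x d) * ((x d :: t.map x).getD p 0 * (t.map x).getD (p + s) 0 *
        (minSum x (c :: d :: (t.take p ++ t.drop (p + s + 1))).formPerm *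
          minSum x ((t.drop p).take (s + 1)).formPerm)) =
        (x d :: t.map x).getD p 0 * (pairNum (k - s) (x c) (x d) * abelNum s 1) := by
      intro p hp
      have hp' : p < k - s := mem_range.1 hp
      have hA : (x c - x d) * minSum x (c :: d :: (t.take p ++ t.drop (p + s + 1))).formPerm =
          pairNum (k - s) (x c) (x d) := by
        have hsub := take_append_drop_sublist t p s
        have := ih (k - s - 1) (by omega) c d _ (by simp; omega)
          (hnd.sublist ((hsub.cons_cons d).cons_cons c)) fun v hv => hx v (hsub.subset hv)
        rwa [show k - s - 1 + 1 = k - s by omega] at this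
      have hB : minSum x ((t.drop p).take (s + 1)).formPerm = abelNum s 1 := by
        have hsub : ((t.drop p).take (s + 1)).Sublist t :=
          (List.take_sublist _ _).trans (List.drop_sublist _ _)
        have hl : ((t.drop p).take (s + 1)).length = s + 1 := by simp; omega
        rcases hd : (t.drop p).take (s + 1) with _ | ⟨e, r⟩
        · simp [hd] at hl
        · rw [hd] at hl hsub
          rw [minSum_one_mark x s e r (by simpa using hl) (hndt.sublist hsub)
            (fun v hv => hx v (hsub.subset (by simp [hv]))), hx e (hsub.subset (by simp))]
      rw [hB, ← hA, getD_map_one hx (by omega)]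
      ring
    rw [show k + 1 - s = (k - s) + 1 by omega, sum_range_succ', mul_add, mul_sum]
    simp only [List.getD_cons_succ, List.take_succ_cons, List.cons_append,
      show ∀ p, p + 1 + s = p + s + 1 by omega, List.drop_succ_cons,
      List.getD_cons_zero, List.take_zero, List.nil_append, zero_add, List.drop_zero]
    rw [sum_congr rfl h1, h0, h0', ← sum_mul]
    have h2 : (∑ p ∈ range (k - s), (x d :: t.map x).getD p 0) * pairNum (k - s) (x c) (x d) =
        (x d + ((k - s : ℕ) : ℚ) - 1) * pairNum (k - s) (x c) (x d) := by
      rcases hks : k - s with _ | q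
      · have : pairNum 0 (x c) (x d) = 0 := by simp [pairNum, abelNum_zero]; ring
        rw [this]; simp
      · rw [sum_range_succ', List.getD_cons_zero]
        rw [sum_congr rfl (g := fun _ => (1 : ℚ)) fun p hp => by
          have := mem_range.1 hp
          rw [List.getD_cons_succ, getD_map_one hx (by omega)]]
        push_cast
        rw [sum_const, card_range, nsmul_eq_mul]
        ring
    rw [← mul_assoc (∑ p ∈ range (k - s), _), h2]
    rcases s with _ | s
    · simp [abelNum_zero]; ring
    · rw [List.getD_cons_succ, getD_map_one hx (by omega)]
      simp
      ring
  rw [sum_congr rfl hterm, sum_add_distrib, sum_add_distrib]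
  congr 2
  rw [← mul_sum, ← mul_sum, sum_ite_eq', if_pos (by simp)]
  ring

end Marks

/-! ### Factorizations of the long cycle -/

section Link
open Equiv Equiv.Perm Finset
variable {α : Type*} [Fintype α] [DecidableEq α]

open Classical in
/-- `factSum` is the weighted count of factorizations of length `k`. -/
lemma sum_fact_eq_factSum (x : α → ℚ) (k : ℕ) (π : Perm α) :
    ∑ f : Fin k → Perm α, (if (∀ ℓ, (f ℓ).IsSwap) ∧ (List.ofFn f).reverse.prod = π
      then ∏ ℓ, wt x (f ℓ) else 0) = factSum x k π := by
  induction k generalizing π with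
  | zero => simp [factSum, eq_comm]
  | succ k ih =>
    rw [← (Fin.consEquiv fun _ : Fin (k + 1) => Perm α).sum_comp, Fintype.sum_prod_type, factSum,
      swaps, Finset.sum_filter]
    refine Finset.sum_congr rfl fun t _ => ?_
    split_ifs with ht
    · rw [← ih, Finset.mul_sum]
      refine Finset.sum_congr rfl fun g _ => ?_
      have hiff : (List.ofFn g).reverse.prod * t = π ↔ (List.ofFn g).reverse.prod = π * t := by
        obtain ⟨a, b, -, rfl⟩ := ht
        constructor
        · rintro rfl; rw [mul_assoc, swap_mul_self, mul_one]
        · intro h; rw [h, mul_assoc, swap_mul_self, mul_one]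
      simp only [Fin.consEquiv_apply, Fin.forall_fin_succ, Fin.cons_zero, Fin.cons_succ, ht,
        true_and, List.ofFn_succ, List.reverse_cons, List.prod_append, List.prod_singleton, hiff,
        Fin.prod_univ_succ, mul_ite, mul_zero]
    · refine Finset.sum_eq_zero fun g _ => if_neg fun h => ht ?_
      simpa using h.1 0

/-- In the weight of a factorization, `x v` occurs once for each transposition moving `v`. -/
lemma prod_wt (x : α → ℚ) {k : ℕ} (f : Fin k → Perm α) :
    ∏ ℓ, wt x (f ℓ) = ∏ v, x v ^ (univ.filter fun ℓ => f ℓ v ≠ v).card := by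
  have h : ∀ ℓ, wt x (f ℓ) = ∏ v, if f ℓ v ≠ v then x v else 1 := by
    intro ℓ
    rw [wt, ← Finset.prod_filter]
    rfl
  simp only [h]
  rw [Finset.prod_comm]
  refine Finset.prod_congr rfl fun v _ => ?_
  rw [← Finset.prod_filter, Finset.prod_const]

end Link

open Equiv Finset

/-- The weights on the points of the `(n + 2)`-cycle: `x` at `0`, `y` at `1`, and `1` elsewhere. -/
def mark (n : ℕ) (x y : ℚ) (v : Fin (n + 2)) : ℚ := if v = 0 then x else if v = 1 then y else 1

lemma finRotate_eq_formPerm (n : ℕ) :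
    finRotate (n + 2) = (List.finRange (n + 2)).formPerm := by
  ext v : 1
  have h := List.formPerm_apply_getElem (List.finRange (n + 2)) (List.nodup_finRange _) v.1
    (by simp)
  simp only [List.getElem_finRange, List.length_finRange, Fin.cast_mk, Fin.eta] at h
  rw [h]
  ext
  simp [Fin.val_add]

open Classical in
/-- The minimal factorizations of the `(n + 1)`-cycle. -/
noncomputable def facts (n : ℕ) : Finset (Fin n → Perm (Fin (n + 1))) :=
  univ.filter IsMinFact

/-- The generating polynomial of `(T_1, T_2)`, evaluated at `x`, `y` and multiplied by `x - y`. -/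
lemma sum_facts (n : ℕ) (x y : ℚ) :
    (x - y) * ∑ f ∈ facts (n + 1), x ^ Tcount f 0 * y ^ Tcount f 1 =
      ((n + 1).factorial : ℚ) * pairNum (n + 1) x y := by
  classical
  have hnd : (List.finRange (n + 2)).Nodup := List.nodup_finRange _
  have h1 := sum_fact_eq_factSum (mark n x y) (n + 1) (finRotate (n + 2))
  have h2 : ∑ f ∈ facts (n + 1), x ^ Tcount f 0 * y ^ Tcount f 1 =
      factSum (mark n x y) (n + 1) (finRotate (n + 2)) := by
    rw [← h1, facts, Finset.sum_filter]
    refine Finset.sum_congr rfl fun f _ => ?_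
    refine if_congr Iff.rfl ?_ rfl
    rw [prod_wt, Fin.prod_univ_succ, Fin.prod_univ_succ]
    rw [Finset.prod_eq_one (s := univ) (f := fun i : Fin n => _)]
    · simp only [mark, Tcount, if_true, mul_one, Fin.succ_zero_eq_one, one_ne_zero, if_false]
      congr!
    · intro v _
      have : (v.succ.succ : Fin (n + 2)) ≠ 1 := by
        rw [← Fin.succ_zero_eq_one]
        exact fun h => Fin.succ_ne_zero v (Fin.succ_injective _ h)
      simp [mark, Fin.succ_ne_zero, this]
  have hnorm : norm (finRotate (n + 2)) = n + 1 := by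
    rw [finRotate_eq_formPerm, norm_formPerm hnd]; simp
  have hl : List.finRange (n + 2) = 0 :: 1 :: ((List.finRange n).map Fin.succ).map Fin.succ := by
    rw [List.finRange_succ, List.finRange_succ]
    simp
  have h3 := minSum_two_marks (mark n x y) n 0 1 (((List.finRange n).map Fin.succ).map Fin.succ)
    (by simp) (hl ▸ hnd) (by
      intro v hv
      simp only [List.map_map, List.mem_map] at hv
      obtain ⟨w, -, rfl⟩ := hv
      have : (w.succ.succ : Fin (n + 2)) ≠ 1 := by
        rw [← Fin.succ_zero_eq_one]
        exact fun h => Fin.succ_ne_zero w (Fin.succ_injective _ h)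
      simp [mark, Fin.succ_ne_zero, this])
  rw [← hl, ← finRotate_eq_formPerm, minSum, hnorm] at h3
  have h4 : ((n + 1).factorial : ℚ) ≠ 0 := by exact_mod_cast Nat.factorial_ne_zero _
  rw [h2]
  simp only [mark, if_true, one_ne_zero, if_false] at h3
  rw [← h3]
  field_simp

/-- The coefficient of `z ^ k` in `(z - 1) (z + N) ^ N = (N + 1)! * abelNum (N + 1) (z - 1)` (see
`factorial_mul_abelNum`). -/
noncomputable def shiftCoeff (N k : ℕ) : ℚ :=
  ((Polynomial.X - 1) * (Polynomial.X + Polynomial.C (N : ℚ)) ^ N : Polynomial ℚ).coeff k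

lemma factorial_mul_abelNum (N : ℕ) (z : ℚ) :
    ((N + 1).factorial : ℚ) * abelNum (N + 1) (z - 1) =
      ∑ k ∈ range (N + 2), shiftCoeff N k * z ^ k := by
  have h4 : ((N + 1).factorial : ℚ) ≠ 0 := by exact_mod_cast Nat.factorial_ne_zero _
  have hdeg : ((Polynomial.X - 1) * (Polynomial.X + Polynomial.C (N : ℚ)) ^ N :
      Polynomial ℚ).natDegree < N + 2 := by
    have : ((Polynomial.X - 1) * (Polynomial.X + Polynomial.C (N : ℚ)) ^ N :
      Polynomial ℚ).natDegree ≤ 1 + N * 1 := by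
      compute_degree
      omega
    omega
  simp only [shiftCoeff]
  rw [← Polynomial.eval_eq_sum_range' hdeg, abelNum_succ]
  simp
  field_simp
  ring

lemma mul_shiftCoeff (N K : ℕ) (hK : K ≤ N) :
    (N : ℚ) * shiftCoeff N (K + 1) =
      ((N + 1).factorial : ℚ) * K * (N : ℚ) ^ (N - K) /
        (((K + 1).factorial : ℚ) * ((N - K).factorial : ℚ)) := by
  obtain ⟨e, rfl⟩ := Nat.exists_eq_add_of_le hK
  have h1 : shiftCoeff (K + e) (K + 1) = ((K + e : ℕ) : ℚ) ^ e * ((K + e).choose K : ℚ) -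
      ((K + e : ℕ) : ℚ) ^ (e - 1) * ((K + e).choose (K + 1) : ℚ) := by
    rw [shiftCoeff, sub_mul, one_mul, Polynomial.coeff_sub, Polynomial.coeff_X_mul,
      Polynomial.coeff_X_add_C_pow, Polynomial.coeff_X_add_C_pow,
      show K + e - K = e by omega, show K + e - (K + 1) = e - 1 by omega]
  have hKf : ((K.factorial : ℕ) : ℚ) ≠ 0 := by exact_mod_cast Nat.factorial_ne_zero _
  have hef : ((e.factorial : ℕ) : ℚ) ≠ 0 := by exact_mod_cast Nat.factorial_ne_zero _
  have h2 : ((K + e).choose K : ℚ) * K.factorial * e.factorial = ((K + e).factorial : ℚ) := by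
    have := Nat.choose_mul_factorial_mul_factorial (Nat.le_add_right K e)
    rw [show K + e - K = e by omega] at this
    exact_mod_cast this
  have h3 : ((K + e).choose (K + 1) : ℚ) * (K + 1) = ((K + e).choose K : ℚ) * e := by
    have := Nat.choose_succ_right_eq (K + e) K
    rw [show K + e - K = e by omega] at this
    exact_mod_cast this
  have hK1 : (K : ℚ) + 1 ≠ 0 := by positivity
  rw [h1, show K + e - K = e by omega, Nat.factorial_succ, Nat.factorial_succ, Nat.cast_mul,
    Nat.cast_mul, ← h2]
  have h3' : ((K + e).choose (K + 1) : ℚ) = ((K + e).choose K : ℚ) * e / (K + 1) := by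
    field_simp; exact h3
  rw [h3']
  rcases e with _ | e
  · push_cast; field_simp; ring
  · rw [Nat.add_sub_cancel, pow_succ]
    push_cast
    field_simp
    ring

open MvPolynomial in
lemma coeff_term (a b i j : ℕ) :
    coeff (Finsupp.single 0 i + Finsupp.single 1 j)
      (X 0 ^ a * X 1 ^ b : MvPolynomial (Fin 2) ℚ) = if a = i ∧ b = j then 1 else 0 := by
  rw [X_pow_eq_monomial, X_pow_eq_monomial, monomial_mul, coeff_monomial, one_mul]
  refine if_congr ⟨fun h => ⟨?_, ?_⟩, ?_⟩ rfl rfl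
  · simpa using DFunLike.congr_fun h 0
  · simpa using DFunLike.congr_fun h 1
  · rintro ⟨rfl, rfl⟩; rfl

open MvPolynomial in
/-- The number of minimal factorizations of the `(N + 2)`-cycle with `T_1 = i` and `T_2 = j`, as the
coefficient of `x ^ i * y ^ j` in the generating polynomial. -/
lemma card_facts (N i j : ℕ) (hi : 1 ≤ i) (hj : 1 ≤ j) (hn : i + j ≤ N + 1) :
    (((facts (N + 1)).filter fun f => Tcount f 0 = i ∧ Tcount f 1 = j).card : ℚ) =
      shiftCoeff N (i + j) * (((i + j).choose i : ℚ) - 1) + shiftCoeff N (i + j - 1) := by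
  -- `S` is the generating polynomial and `U` is the closed form of `sum_facts` divided by `x - y`.
  let S : MvPolynomial (Fin 2) ℚ := ∑ f ∈ facts (N + 1), X 0 ^ Tcount f 0 * X 1 ^ Tcount f 1
  let U : MvPolynomial (Fin 2) ℚ := ∑ k ∈ range (N + 2), C (shiftCoeff N k) *
    (∑ a ∈ range (k + 1), C ((k.choose a : ℚ) - 1) * (X 0 ^ a * X 1 ^ (k - a)) +
      ∑ a ∈ range k, X 0 ^ (a + 1) * X 1 ^ (k - a))
  have hSU : S = U := by
    have hne : (X 0 - X 1 : MvPolynomial (Fin 2) ℚ) ≠ 0 := by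
      rw [sub_ne_zero]
      intro h
      have := X_injective h
      simp at this
    apply mul_left_cancel₀ hne
    apply MvPolynomial.funext
    intro z
    simp only [S, U, map_mul, map_sub, map_sum, map_add, map_pow, eval_X, eval_C]
    rw [sum_facts, pairNum]
    generalize z 0 = x
    generalize z 1 = y
    have e : ((N + 1).factorial : ℚ) * ((x - y) * abelNum (N + 1) (x + y - 1) +
        x * (y - 1) * abelNum (N + 1) (x - 1) - y * (x - 1) * abelNum (N + 1) (y - 1)) =
        (x - y) * (((N + 1).factorial : ℚ) * abelNum (N + 1) (x + y - 1)) +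
        x * (y - 1) * (((N + 1).factorial : ℚ) * abelNum (N + 1) (x - 1)) -
        y * (x - 1) * (((N + 1).factorial : ℚ) * abelNum (N + 1) (y - 1)) := by ring
    rw [e]
    simp only [factorial_mul_abelNum, mul_sum (range (N + 2))]
    rw [← sum_add_distrib, ← sum_sub_distrib]
    refine sum_congr rfl fun k _ => ?_
    have g1 : (x - y) * ∑ a ∈ range (k + 1), x ^ a * y ^ (k - a) = x ^ (k + 1) - y ^ (k + 1) := by
      have := (Commute.all x y).mul_geom_sum₂ (k + 1)
      simpa using this
    have g2 : (x - y) * ∑ a ∈ range k, x ^ (a + 1) * y ^ (k - a) = x * y * (x ^ k - y ^ k) := by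
      rw [← (Commute.all x y).mul_geom_sum₂ k, mul_left_comm (x * y)]
      congr 1
      rw [mul_sum]
      refine sum_congr rfl fun a ha => ?_
      have := mem_range.1 ha
      rw [show k - a = (k - 1 - a) + 1 by omega]
      ring
    have g3 : ∑ a ∈ range (k + 1), ((k.choose a : ℚ) - 1) * (x ^ a * y ^ (k - a)) =
        (x + y) ^ k - ∑ a ∈ range (k + 1), x ^ a * y ^ (k - a) := by
      rw [add_pow, ← sum_sub_distrib]
      exact sum_congr rfl fun a _ => by ring
    rw [g3]
    linear_combination shiftCoeff N k * g1 - shiftCoeff N k * g2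
  have hc := congrArg (coeff (Finsupp.single 0 i + Finsupp.single 1 j)) hSU
  simp only [S, U, coeff_sum, coeff_C_mul, coeff_add, coeff_term] at hc
  rw [← sum_filter, sum_const, nsmul_eq_mul, mul_one] at hc
  rw [hc]
  have t1 : ∀ k, ∑ a ∈ range (k + 1), ((k.choose a : ℚ) - 1) * (if a = i ∧ k - a = j then 1 else 0) =
      if k = i + j then (((i + j).choose i : ℚ) - 1) else 0 := by
    intro k
    split_ifs with h
    · subst h
      rw [sum_eq_single i]
      · simp
      · intro a _ ha; simp [ha]
      · intro h; simp at h
    · refine sum_eq_zero fun a ha => ?_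
      have := mem_range.1 ha
      rw [if_neg (by omega), mul_zero]
  have t2 : ∀ k, ∑ a ∈ range k, (if a + 1 = i ∧ k - a = j then (1 : ℚ) else 0) =
      if k = i + j - 1 then 1 else 0 := by
    intro k
    split_ifs with h
    · subst h
      rw [sum_eq_single (i - 1)]
      · rw [if_pos (by omega)]
      · intro a _ ha; rw [if_neg (by omega)]
      · intro h; simp at h; omega
    · refine sum_eq_zero fun a ha => ?_
      have := mem_range.1 ha
      rw [if_neg (by omega)]
  simp only [t1, t2]
  simp only [mul_add, sum_add_distrib, mul_ite, mul_zero, mul_one, sum_ite_eq',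
    mem_range]
  rw [if_pos (by omega), if_pos (by omega)]

end MinFact

/-- Theorem 1.1 of the paper: the joint law of `(T_1, T_2)` on uniform minimal
factorizations of the `(n+1)`-cycle.  Vertex `1` is `(0 : Fin (n+1))` and vertex `2`
is `(1 : Fin (n+1))`. -/
theorem stmt_0 (i j n : ℕ) (hi : 1 ≤ i) (hj : 1 ≤ j) (hn : i + j ≤ n) :
    ((n : ℚ) - 1) *
      (Nat.card {τ : Fin n → Equiv.Perm (Fin (n + 1)) //
        IsMinFact τ ∧ Tcount τ 0 = i ∧ Tcount τ 1 = j} : ℚ) =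
    ((n.factorial : ℚ) / ((n - i - j).factorial : ℚ)) * ((n : ℚ) - 1) ^ (n - i - j) *
      ( ((i : ℚ) + (j : ℚ) - 2) * ((n : ℚ) - 1) /
          ((((i + j - 1).factorial : ℚ)) * ((n : ℚ) - (i : ℚ) - (j : ℚ) + 1))
        + ((i : ℚ) + (j : ℚ) - 1) / ((i.factorial : ℚ) * (j.factorial : ℚ))
        - ((i : ℚ) + (j : ℚ) - 1) / (((i + j).factorial : ℚ)) ) := by
  classical
  obtain ⟨e, rfl⟩ := Nat.exists_eq_add_of_le hn
  obtain ⟨q, hq⟩ : ∃ q, i + j = q + 2 := ⟨i + j - 2, by omega⟩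
  obtain ⟨N, hN⟩ : ∃ N, i + j + e = N + 1 := ⟨i + j + e - 1, by omega⟩
  have hNq : N = q + 1 + e := by omega
  have hcard : Nat.card {τ : Fin (i + j + e) → Equiv.Perm (Fin (i + j + e + 1)) //
        IsMinFact τ ∧ Tcount τ 0 = i ∧ Tcount τ 1 = j} =
      ((MinFact.facts (i + j + e)).filter fun f => Tcount f 0 = i ∧ Tcount f 1 = j).card := by
    rw [MinFact.facts, Finset.filter_filter, Nat.card_eq_fintype_card, Fintype.card_subtype]
  have hijq : (i : ℚ) + j = q + 2 := by exact_mod_cast hq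
  have hch : ((i + j).choose i : ℚ) = ((q + 2).factorial : ℚ) / (i.factorial * j.factorial) := by
    rw [Nat.cast_add_choose, hq]
  have hs1 := MinFact.mul_shiftCoeff N (q + 1) (by omega)
  have hs2 := MinFact.mul_shiftCoeff N q (by omega)
  have hfac := MinFact.card_facts N i j hi hj (by omega)
  rw [hcard, show i + j + e - i - j = e by omega]
  rw [hch, show i + j - 1 = q + 1 by omega, hq] at hfac
  rw [show N - (q + 1) = e by omega] at hs1
  rw [show N - q = e + 1 by omega] at hs2
  have hn1 : ((i + j + e : ℕ) : ℚ) = (N : ℚ) + 1 := by rw [hN]; push_cast; rfl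
  have hden : ((i + j + e : ℕ) : ℚ) - i - j + 1 = (e : ℚ) + 1 := by push_cast; ring
  rw [hden, hn1, add_sub_cancel_right, hN, hfac, mul_add, ← mul_assoc, hs1, hs2,
    show i + j - 1 = q + 1 by omega, hq, show (i : ℚ) + j - 2 = q by rw [hijq]; ring,
    show (i : ℚ) + j - 1 = q + 1 by rw [hijq]; ring, Nat.factorial_succ e]
  have f1 : ((i.factorial : ℕ) : ℚ) ≠ 0 := by exact_mod_cast Nat.factorial_ne_zero _
  have f2 : ((j.factorial : ℕ) : ℚ) ≠ 0 := by exact_mod_cast Nat.factorial_ne_zero _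
  have f3 : ((e.factorial : ℕ) : ℚ) ≠ 0 := by exact_mod_cast Nat.factorial_ne_zero _
  have f4 : (((q + 1).factorial : ℕ) : ℚ) ≠ 0 := by exact_mod_cast Nat.factorial_ne_zero _
  have f5 : (((q + 2).factorial : ℕ) : ℚ) ≠ 0 := by exact_mod_cast Nat.factorial_ne_zero _
  have f6 : (e : ℚ) + 1 ≠ 0 := by positivity
  rw [show q + 1 + 1 = q + 2 from rfl]
  push_cast
  field_simp
  ring
end

section
/- Let i, j ≥ 1 and n ≥ i + j be integers. Let N be the number of Cayley trees t on {1, …, n+1} with deg_1(t) = i and deg'_2(t) = j. Then, as an identity in ℚ, (n−1)·N = (n!/(n−i−j)!)·(n−1)^{n−i−j}·[ (i+j−2)(n−1)/((i+j−1)!·(n−i−j+1)) + (i+j−1)/(i!·j!) − (i+j−1)/(i+j)! ]. -/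
/-!
A tree `t` on `{0, …, n}` is encoded by its parent function `p` towards the root `0`
(`parentGraph_isTree`, `parentGraph_injective`, `exists_parentGraph_eq`). Along the greedy path
labels increase, so the path only moves from a vertex to one of its children.

Let `v ≠ 0` be the last vertex of the path. Cut the edge above `v`, that is, replace `p v` by `v`;
the result is a forest `q` with roots `0` and `v`. The lost value `p v` can be read off from `q`: it
is the end of the greedy path from `0` in which only labels below `v` are used (`truncEnd`,
`GEnd_upChild_iff`). Hence trees whose path ends at `v` correspond bijectively to forests rooted
at `0` and `v` in which all children of `v` are smaller than `v` (`card_cut`).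

Let `A` and `B` be the sets of children of `0` and `v` in `q`. Then `deg'_2 = |B| + 1`, whereas
`deg_1 = |A| + 1` if all of `A` lies above `v` (the path then is the edge from `0` to `v`), and
`deg_1 = |A|` otherwise. For given `A` and `B` with `r = |A| + |B|`, removing `0` and `v` leaves a
forest on `n - 1` vertices with `r` prescribed roots, and there are `r (n - 1)^(n - 2 - r)` of those
(`card_rootedForests`, proved by splitting a forest into its first layer and the rest).

It remains to count the triples `(v, A, B)`. With `A` above `v`, `|A| = i - 1` and `|B| = j - 1`
they number `C(n, i + j - 1)`; with `A` not above `v`, `|A| = i` and `|B| = j - 1` they number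
`C(n, j) C(n - j, i) - C(n, i + j)` (`sum_pairsAdj`, `sum_pairsFar`). The claimed identity is the sum
of these two contributions.
-/

/- The next vertex on the greedy increasing path: the smallest neighbour of `v`
with a larger label, or `v` itself if there is none. -/
open Classical in
noncomputable def greedyNext {m : ℕ} (t : SimpleGraph (Fin m)) (v : Fin m) : Fin m :=
  if h : (Finset.univ.filter fun w => t.Adj v w ∧ v < w).Nonempty
  then (Finset.univ.filter fun w => t.Adj v w ∧ v < w).min' h
  else v

/- The last vertex `v_M` of the greedy increasing path started at `v`
(after `m` steps the path has stabilised). -/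
noncomputable def greedyLast {m : ℕ} (t : SimpleGraph (Fin m)) (v : Fin m) : Fin m :=
  (greedyNext t)^[m] v

/- The number `M` of edges of the greedy increasing path started at `v`. -/
open Classical in
noncomputable def greedyLenFrom {m : ℕ} (t : SimpleGraph (Fin m)) (v : Fin m) : ℕ :=
  ((Finset.range m).filter fun k => (greedyNext t)^[k + 1] v ≠ (greedyNext t)^[k] v).card

/- `deg_1`: the degree of the vertex labelled `1` (index `0`). -/
noncomputable def deg1 {m : ℕ} (t : SimpleGraph (Fin m)) : ℕ :=
  if h : 0 < m then (t.neighborSet ⟨0, h⟩).ncard else 0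

/- `deg_2`: the degree of the vertex labelled `2` (index `1`). -/
noncomputable def deg2 {m : ℕ} (t : SimpleGraph (Fin m)) : ℕ :=
  if h : 1 < m then (t.neighborSet ⟨1, h⟩).ncard else 0

/- `|L_1(t)|`: the length of the greedy increasing path started at vertex `1`. -/
noncomputable def L1len {m : ℕ} (t : SimpleGraph (Fin m)) : ℕ :=
  if h : 0 < m then greedyLenFrom t ⟨0, h⟩ else 0

/- `deg'_2`: the degree of the last vertex of the greedy increasing path started at `1`. -/
noncomputable def deg2' {m : ℕ} (t : SimpleGraph (Fin m)) : ℕ :=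
  if h : 0 < m then (t.neighborSet (greedyLast t ⟨0, h⟩)).ncard else 0

open Finset

/-! ### Counting rooted forests -/

section Forests

variable {V : Type*} [Fintype V] [DecidableEq V]

/-- `p` is the parent function of a rooted forest with root set `C`, in which no root belonging to
`D` has a child. Roots are fixed points of `p`; acyclicity is expressed by a height function `h`
that strictly decreases from every other vertex to its parent. -/
def IsRootedForest (C D : Finset V) (p : V → V) : Prop :=
  (∀ c ∈ C, p c = c) ∧ (∀ x ∉ C, p x ∉ D) ∧ ∃ h : V → ℕ, ∀ x ∉ C, h (p x) < h x

open Classical in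
/-- The finite set of rooted forests in the sense of `IsRootedForest C D`. -/
noncomputable def rootedForests (C D : Finset V) : Finset (V → V) :=
  univ.filter (IsRootedForest C D)

lemma mem_rootedForests {C D : Finset V} {p : V → V} :
    p ∈ rootedForests C D ↔ IsRootedForest C D p := by
  simp [rootedForests]

open Classical in
/-- Forests whose first layer is `A`, each `a ∈ A` having the prescribed parent `g a`: turning the
vertices of `A` into roots gives all forests with root set `C ∪ A` in which `C` has no children. -/
lemma card_layer {C D A : Finset V} (hD : D ⊆ C) (hA : Disjoint A C) (g : V → V)
    (hg : ∀ a ∈ A, g a ∈ C \ D) :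
    #{p ∈ rootedForests C D | ∀ x ∉ C, (x ∈ A → p x = g x) ∧ (x ∉ A → p x ∉ C)} =
      #(rootedForests (C ∪ A) C) := by
  have hAC : ∀ x ∈ A, x ∉ C := fun x hx => Finset.disjoint_left.1 hA hx
  refine Finset.card_bij' (fun p _ x => if x ∈ A then x else p x)
    (fun p _ x => if x ∈ A then g x else p x) ?_ ?_ ?_ ?_
  · intro p hp
    simp only [mem_filter, mem_rootedForests] at hp ⊢
    obtain ⟨⟨h1, h2, h, hh⟩, h4⟩ := hp
    refine ⟨?_, ?_, h, ?_⟩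
    · intro c hc
      by_cases hcA : c ∈ A
      · simp [hcA]
      · simp only [hcA, if_false]
        exact h1 c (by simpa [hcA] using hc)
    · intro x hx
      simp only [mem_union, not_or] at hx
      simpa [hx.2] using (h4 x hx.1).2 hx.2
    · intro x hx
      simp only [mem_union, not_or] at hx
      simpa [hx.2] using hh x hx.1
  · intro p hp
    simp only [mem_filter, mem_rootedForests] at hp ⊢
    obtain ⟨h1, h2, h, hh⟩ := hp
    simp only [mem_union, not_or] at h1 h2 hh
    refine ⟨⟨?_, ?_, fun x => if x ∈ C then 0 else h x + 1, ?_⟩, ?_⟩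
    · intro c hc
      have : c ∉ A := fun hcA => hAC c hcA hc
      simp [this, h1 c (Or.inl hc)]
    · intro x hx
      by_cases hxA : x ∈ A
      · simpa [hxA] using (mem_sdiff.1 (hg x hxA)).2
      · simpa [hxA] using fun hd => h2 x ⟨hx, hxA⟩ (hD hd)
    · intro x hx
      by_cases hxA : x ∈ A
      · simp [hxA, (mem_sdiff.1 (hg x hxA)).1, hx]
      · simpa [hxA, hx, h2 x ⟨hx, hxA⟩] using hh x ⟨hx, hxA⟩
    · intro x hx
      by_cases hxA : x ∈ A
      · simp [hxA]
      · simpa [hxA] using h2 x ⟨hx, hxA⟩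
  · intro p hp
    simp only [mem_filter, mem_rootedForests] at hp
    funext x
    by_cases hxA : x ∈ A
    · simp [hxA, (hp.2 x (hAC x hxA)).1 hxA]
    · simp [hxA]
  · intro p hp
    simp only [mem_rootedForests] at hp
    funext x
    by_cases hxA : x ∈ A
    · simp [hxA, hp.1 x (by simp [hxA])]
    · simp [hxA]

open Classical in
/-- As in `card_layer`, with the parents of the first layer `A` chosen freely in `C \ D`. -/
lemma card_first_layer {C D A : Finset V} (hD : D ⊆ C) (hA : Disjoint A C) :
    #{p ∈ rootedForests C D | ({x | x ∉ C ∧ p x ∈ C} : Finset V) = A} =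
      #(C \ D) ^ #A * #(rootedForests (C ∪ A) C) := by
  have hAC : ∀ x ∈ A, x ∉ C := fun x hx => Finset.disjoint_left.1 hA hx
  set T : Finset (V → V) := Fintype.piFinset (fun x => if x ∈ A then C \ D else {x}) with hT
  have hTc : #T = #(C \ D) ^ #A := by
    rw [hT, Fintype.card_piFinset]
    have : ∀ x, #(if x ∈ A then C \ D else {x}) = if x ∈ A then #(C \ D) else 1 := by
      intro x; split_ifs <;> simp
    simp only [this]
    rw [Finset.prod_ite]
    simp
  rw [Finset.card_eq_sum_card_fiberwise (f := fun p x => if x ∈ A then p x else x) (t := T)]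
  · rw [← hTc, Finset.card_eq_sum_ones T, Finset.sum_mul]
    refine Finset.sum_congr rfl fun g hg => ?_
    rw [hT, Fintype.mem_piFinset] at hg
    rw [one_mul, ← card_layer hD hA g (fun a ha => by simpa [ha] using hg a)]
    congr 1
    ext p
    simp only [mem_filter, and_assoc, and_congr_right_iff]
    intro hp
    simp only [Finset.ext_iff, mem_filter, mem_univ, true_and, funext_iff]
    constructor
    · rintro ⟨h1, h2⟩ x hx
      refine ⟨fun hxA => ?_, fun hxA hpx => hxA ((h1 x).1 ⟨hx, hpx⟩)⟩
      simpa [hxA] using h2 x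
    · intro h
      refine ⟨fun x => ⟨fun hx => ?_, fun hx => ⟨hAC x hx, ?_⟩⟩, fun x => ?_⟩
      · by_contra hxA
        exact (h x hx.1).2 hxA hx.2
      · rw [(h x (hAC x hx)).1 hx]
        have := hg x
        simp only [hx, if_true, mem_sdiff] at this
        exact this.1
      · by_cases hxA : x ∈ A
        · simp [hxA, (h x (hAC x hxA)).1 hxA]
        · have := hg x
          simp only [hxA, if_false, mem_singleton] at this
          simp [hxA, this]
  · intro p hp
    simp only [coe_filter, Set.mem_ofPred_eq, mem_rootedForests] at hp
    obtain ⟨⟨h1, h2, -⟩, h3⟩ := hp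
    simp only [hT, Finset.mem_coe, Fintype.mem_piFinset]
    intro x
    by_cases hxA : x ∈ A
    · have : x ∉ C ∧ p x ∈ C := by simpa [← h3] using hxA
      simpa [hxA, this.2] using h2 x this.1
    · simp [hxA]

/-- With `m` non-roots and `r = |C \ D|` usable roots there are `r (m + r)^(m - 1)` forests; the
factor `m + r` on the left makes the formula valid for `m = 0` too. Summing over the first layer
reduces it to the binomial theorem for `(r + m)^(m - 1)`. -/
lemma card_rootedForests (m : ℕ) : ∀ {C D : Finset V}, D ⊆ C → #Cᶜ = m →
    (m + #(C \ D)) * #(rootedForests C D) = #(C \ D) * (m + #(C \ D)) ^ m := by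
  classical
  induction m using Nat.strong_induction_on with
  | _ m ih =>
  intro C D hD hm
  rcases Nat.eq_zero_or_pos m with rfl | hmpos
  · have hC : C = univ := by
      rwa [Finset.card_eq_zero, Finset.compl_eq_empty_iff] at hm
    have : rootedForests C D = {id} := by
      ext p
      subst hC
      simp only [mem_rootedForests, IsRootedForest, mem_singleton]
      constructor
      · rintro ⟨h, -⟩
        funext x
        exact h x (mem_univ x)
      · rintro rfl
        exact ⟨fun _ _ => rfl, by simp, fun _ => 0, by simp⟩
    simp [this]
  · obtain ⟨k, rfl⟩ := Nat.exists_eq_add_one.2 hmpos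
    set r := #(C \ D) with hr
    have hrec : #(rootedForests C D) =
        ∑ A ∈ Cᶜ.powerset, r ^ #A * #(rootedForests (C ∪ A) C) := by
      rw [Finset.card_eq_sum_card_fiberwise
        (f := fun p => ({x | x ∉ C ∧ p x ∈ C} : Finset V)) (t := Cᶜ.powerset)]
      · refine Finset.sum_congr rfl fun A hA => ?_
        rw [mem_powerset] at hA
        exact card_first_layer hD (Finset.disjoint_left.2 fun x hx => by simpa using hA hx)
      · intro p _
        simp only [mem_coe, mem_powerset]
        intro x hx
        simp only [mem_filter, mem_univ, true_and] at hx
        simpa using hx.1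
    have hterm : ∀ A ∈ Cᶜ.powerset, (k + 1) * (r ^ #A * #(rootedForests (C ∪ A) C)) =
        r ^ #A * (#A * (k + 1) ^ (k + 1 - #A)) := by
      intro A hA
      rw [mem_powerset] at hA
      have hAC : Disjoint A C := Finset.disjoint_left.2 fun x hx => by simpa using hA hx
      have hle : #A ≤ k + 1 := hm ▸ card_le_card hA
      have hsd : (C ∪ A) \ C = A := by
        rw [Finset.union_sdiff_left, Finset.sdiff_eq_self_of_disjoint hAC]
      have hcc : #(C ∪ A)ᶜ = k + 1 - #A := by
        rw [Finset.compl_union, ← Finset.sdiff_eq_inter_compl, Finset.card_sdiff_of_subset hA, hm]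
      rcases Nat.eq_zero_or_pos (#A) with h0 | hpos
      · -- an empty first layer leaves no room for the remaining vertices
        have hA0 : A = ∅ := Finset.card_eq_zero.1 h0
        have hemp : rootedForests (C ∪ A) C = ∅ := by
          rw [Finset.eq_empty_iff_forall_notMem]
          intro p hp
          rw [mem_rootedForests, hA0, Finset.union_empty] at hp
          obtain ⟨-, h2, h, hh⟩ := hp
          obtain ⟨x, hx⟩ : (Cᶜ).Nonempty := Finset.card_pos.1 (by omega)
          obtain ⟨y, hy, hmin⟩ := Finset.exists_min_image Cᶜ h ⟨x, hx⟩
          have hyC : y ∉ C := by simpa using hy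
          exact absurd (hh y hyC) (not_lt.2 (hmin _ (by simpa using h2 y hyC)))
        simp [hemp, h0]
      · have := ih (k + 1 - #A) (by omega) (C := C ∪ A) (D := C) Finset.subset_union_left hcc
        rw [hsd, Nat.sub_add_cancel hle] at this
        rw [mul_left_comm, this]
    have hsum : (k + 1) * #(rootedForests C D) = (k + 1) * (r * (k + 1 + r) ^ k) := by
      rw [hrec, Finset.mul_sum, Finset.sum_congr rfl hterm,
        Finset.sum_powerset_apply_card (fun a => r ^ a * (a * (k + 1) ^ (k + 1 - a))), hm,
        Finset.sum_range_succ', add_comm (k + 1) r, add_pow r (k + 1) k, Finset.mul_sum, Finset.mul_sum]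
      simp only [zero_mul, mul_zero, smul_zero, add_zero]
      refine Finset.sum_congr rfl fun a _ => ?_
      have hc := Nat.add_one_mul_choose_eq k a
      rw [smul_eq_mul, Nat.add_sub_add_right, pow_succ]
      calc (k + 1).choose (a + 1) * (r ^ a * r * ((a + 1) * (k + 1) ^ (k - a)))
          = ((k + 1).choose (a + 1) * (a + 1)) * (r ^ a * r * (k + 1) ^ (k - a)) := by ring
        _ = _ := by rw [← hc, Nat.cast_id]; ring
    rw [Nat.eq_of_mul_eq_mul_left (Nat.succ_pos k) hsum]
    rw [pow_succ]
    ring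

end Forests

/-! ### Greedy paths -/

/-- A greedy step for the relation `R`: from `y` to its smallest `R`-successor `w`. -/
def GStep {V : Type*} [LinearOrder V] (R : V → V → Prop) (y w : V) : Prop :=
  R y w ∧ ∀ z, R y z → w ≤ z

/-- The greedy path of `R` from `x` ends at `u`. -/
def GEnd {V : Type*} [LinearOrder V] (R : V → V → Prop) (x u : V) : Prop :=
  Relation.ReflTransGen (GStep R) x u ∧ ∀ z, ¬ R u z

lemma GEnd.unique {V : Type*} [LinearOrder V] {R : V → V → Prop} {x u u' : V}
    (h : GEnd R x u) (h' : GEnd R x u') : u = u' := by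
  have hU : Relator.RightUnique (GStep R) := fun a b c hb hc =>
    le_antisymm (hb.2 c hc.1) (hc.2 b hb.1)
  rcases Relation.ReflTransGen.total_of_right_unique hU h.1 h'.1 with h1 | h1
  · rcases Relation.ReflTransGen.cases_head h1 with h2 | ⟨c, hc, -⟩
    · exact h2
    · exact absurd hc.1 (h.2 c)
  · rcases Relation.ReflTransGen.cases_head h1 with h2 | ⟨c, hc, -⟩
    · exact h2.symm
    · exact absurd hc.1 (h'.2 c)

lemma GEnd.exists {V : Type*} [LinearOrder V] [Finite V] {R : V → V → Prop}
    (hR : ∀ y w, R y w → y < w) (x : V) : ∃ u, GEnd R x u := by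
  classical
  have := Fintype.ofFinite V
  induction x using WellFoundedGT.induction with
  | _ x ih =>
  by_cases hx : ∃ z, R x z
  · have hne : (univ.filter (R x)).Nonempty := by
      obtain ⟨z, hz⟩ := hx
      exact ⟨z, by simpa using hz⟩
    have hmem := Finset.min'_mem _ hne
    have hstep : GStep R x ((univ.filter (R x)).min' hne) :=
      ⟨by simpa using hmem, fun z hz => Finset.min'_le _ _ (by simpa using hz)⟩
    obtain ⟨u, hu1, hu2⟩ := ih _ (hR _ _ hstep.1)
    exact ⟨u, Relation.ReflTransGen.head hstep hu1, hu2⟩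
  · exact ⟨x, Relation.ReflTransGen.refl, fun z hz => hx ⟨z, hz⟩⟩

/-- Relations that agree on an invariant set containing the greedy path have the same path. -/
lemma GEnd.transfer {V : Type*} [LinearOrder V] {R R' : V → V → Prop} (I : V → Prop) {x u : V}
    (hx : I x) (hI : ∀ y w, I y → R y w → I w) (hRR : ∀ y w, I y → (R y w ↔ R' y w))
    (h : GEnd R x u) : GEnd R' x u := by
  have key : Relation.ReflTransGen (GStep R') x u ∧ I u := by
    obtain ⟨h1, -⟩ := h
    induction h1 with
    | refl => exact ⟨.refl, hx⟩
    | tail _ hbc ih =>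
      refine ⟨ih.1.tail ⟨(hRR _ _ ih.2).1 hbc.1, fun z hz => hbc.2 z ((hRR _ _ ih.2).2 hz)⟩,
        hI _ _ ih.2 hbc.1⟩
  exact ⟨key.1, fun z hz => h.2 z ((hRR _ _ key.2).2 hz)⟩

/-- `w` is a neighbour of `y` in `t` with a larger label. -/
def upAdj {m : ℕ} (t : SimpleGraph (Fin m)) (y w : Fin m) : Prop := t.Adj y w ∧ y < w

lemma greedyNext_cases {m : ℕ} (t : SimpleGraph (Fin m)) (y : Fin m) :
    GStep (upAdj t) y (greedyNext t y) ∨ ((∀ z, ¬ upAdj t y z) ∧ greedyNext t y = y) := by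
  classical
  unfold greedyNext
  split_ifs with h
  · left
    have hmem := Finset.min'_mem _ h
    exact ⟨(mem_filter.1 hmem).2,
      fun z hz => Finset.min'_le _ _ (by simpa [upAdj] using hz)⟩
  · right
    refine ⟨fun z hz => h ⟨z, by simpa [upAdj] using hz⟩, rfl⟩

/-- Labels grow with each step, so `m` steps on `Fin m` suffice to reach the end of the path. -/
lemma GEnd_greedyLast {m : ℕ} (t : SimpleGraph (Fin m)) (x : Fin m) :
    GEnd (upAdj t) x (greedyLast t x) := by
  have key : ∀ k, Relation.ReflTransGen (GStep (upAdj t)) x ((greedyNext t)^[k] x) ∧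
      ((∀ z, ¬ upAdj t ((greedyNext t)^[k] x) z) ∨ k ≤ ((greedyNext t)^[k] x).val) := by
    intro k
    induction k with
    | zero => exact ⟨.refl, Or.inr (Nat.zero_le _)⟩
    | succ k ih =>
      rw [Function.iterate_succ_apply']
      rcases greedyNext_cases t ((greedyNext t)^[k] x) with h | ⟨h1, h2⟩
      · refine ⟨ih.1.tail h, Or.inr ?_⟩
        rcases ih.2 with h' | h'
        · exact absurd h.1 (h' _)
        · have := h.1.2
          rw [Fin.lt_def] at this
          omega
      · rw [h2]
        exact ⟨ih.1, Or.inl h1⟩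
  refine ⟨(key m).1, ?_⟩
  rcases (key m).2 with h | h
  · exact h
  · exact absurd ((greedyNext t)^[m] x).isLt (not_lt.2 h)

lemma greedyLast_eq_iff {m : ℕ} (t : SimpleGraph (Fin m)) (x v : Fin m) :
    greedyLast t x = v ↔ GEnd (upAdj t) x v :=
  ⟨fun h => h ▸ GEnd_greedyLast t x, fun h => (GEnd_greedyLast t x).unique h⟩

/-! ### Trees as parent functions -/

/-- The graph whose edges join each `x` to `p x`; fixed points of `p` contribute no edge. -/
def parentGraph {V : Type*} (p : V → V) : SimpleGraph V where
  Adj x y := x ≠ y ∧ (p x = y ∨ p y = x)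
  symm := ⟨fun _ _ h => ⟨h.1.symm, h.2.symm⟩⟩
  loopless := ⟨fun _ h => h.1 rfl⟩

section Graph

variable {n : ℕ} {p : Fin (n + 1) → Fin (n + 1)}

lemma IsRootedForest.ne_self {V : Type*} {C D : Finset V} {p : V → V}
    (hp : IsRootedForest C D p) {x : V} (hx : x ∉ C) : p x ≠ x := by
  obtain ⟨-, -, h, hh⟩ := hp
  intro he
  have := hh x hx
  rw [he] at this
  exact lt_irrefl _ this

lemma parentGraph_isTree (hp : IsRootedForest {0} ∅ p) : (parentGraph p).IsTree := by
  classical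
  have hne : ∀ x, x ≠ 0 → p x ≠ x := fun x hx => hp.ne_self (by simpa using hx)
  obtain ⟨h0, -, h, hh⟩ := hp
  simp only [mem_singleton, forall_eq] at h0 hh
  have hreach : ∀ k x, h x = k → (parentGraph p).Reachable x 0 := by
    intro k
    induction k using Nat.strong_induction_on with
    | _ k ih =>
    intro x hx
    by_cases hx0 : x = 0
    · rw [hx0]
    · have hadj : (parentGraph p).Adj x (p x) := ⟨(hne x hx0).symm, Or.inl rfl⟩
      exact hadj.reachable.trans (ih _ (hx ▸ hh x hx0) _ rfl)
  rw [SimpleGraph.isTree_iff_connected_and_card]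
  refine ⟨⟨fun x y => (hreach _ x rfl).trans (hreach _ y rfl).symm⟩, ?_⟩
  have hE : (parentGraph p).edgeSet = (fun x => s(x, p x)) '' {x | x ≠ 0} := by
    ext e
    induction e using Sym2.ind with
    | _ x y =>
    simp only [SimpleGraph.mem_edgeSet, Set.mem_image, Set.mem_ofPred_eq]
    constructor
    · rintro ⟨hxy, h1 | h1⟩
      · refine ⟨x, ?_, by rw [h1]⟩
        rintro rfl
        exact hxy (h0.symm.trans h1)
      · refine ⟨y, ?_, by rw [h1, Sym2.eq_swap]⟩
        rintro rfl
        exact hxy (h1.symm.trans h0)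
    · rintro ⟨z, hz, he⟩
      rw [Sym2.eq_iff] at he
      rcases he with ⟨rfl, rfl⟩ | ⟨rfl, rfl⟩
      · exact ⟨(hne _ hz).symm, Or.inl rfl⟩
      · exact ⟨hne _ hz, Or.inr rfl⟩
  have hinj : Set.InjOn (fun x => s(x, p x)) {x | x ≠ 0} := by
    intro x hx y hy hxy
    simp only [Sym2.eq_iff] at hxy
    rcases hxy with ⟨h1, -⟩ | ⟨h1, h2⟩
    · exact h1
    · have a1 := hh x hx
      have a2 := hh y hy
      rw [h2] at a1
      rw [← h1] at a2
      omega
  rw [Nat.card_coe_set_eq, hE, hinj.ncard_image]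
  have : ({x | x ≠ 0} : Set (Fin (n + 1))) = ((univ.erase 0 : Finset (Fin (n + 1))) : Set _) := by
    ext x; simp
  rw [this, Set.ncard_coe_finset]
  simp

lemma parentGraph_injective {q : Fin (n + 1) → Fin (n + 1)} (hp : IsRootedForest {0} ∅ p)
    (hq : IsRootedForest {0} ∅ q) (h : parentGraph p = parentGraph q) : p = q := by
  have hne : ∀ x, x ≠ 0 → p x ≠ x := fun x hx => hp.ne_self (by simpa using hx)
  obtain ⟨h0, -, r, hr⟩ := hp
  obtain ⟨k0, -, -⟩ := hq
  simp only [mem_singleton, forall_eq] at h0 hr k0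
  have key : ∀ k x, r x = k → p x = q x := by
    intro k
    induction k using Nat.strong_induction_on with
    | _ k ih =>
    intro x hx
    by_cases hx0 : x = 0
    · rw [hx0, h0, k0]
    · have hadj : (parentGraph q).Adj x (p x) := h ▸ ⟨(hne x hx0).symm, Or.inl rfl⟩
      rcases hadj.2 with h1 | h1
      · exact h1.symm
      · have h2 := ih _ (hx ▸ hr x hx0) (p x) rfl
        by_cases hpx : p x = 0
        · rw [hpx, k0] at h1
          exact absurd h1.symm hx0
        · have a1 := hr x hx0
          have a2 := hr _ hpx
          rw [h2, h1] at a2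
          omega
  funext x
  exact key _ x rfl

/-- The parent of `x` is a neighbour of `x` that is closer to the root `0`. -/
lemma exists_parentGraph_eq {t : SimpleGraph (Fin (n + 1))} (ht : t.IsTree) :
    ∃ p, IsRootedForest {0} ∅ p ∧ parentGraph p = t := by
  classical
  have hconn := ht.connected
  have hex : ∀ x, x ≠ 0 → ∃ y, t.Adj x y ∧ t.dist y 0 < t.dist x 0 := by
    intro x hx
    obtain ⟨w, hw⟩ := hconn.exists_walk_length_eq_dist x 0
    cases w with
    | nil => exact absurd rfl hx
    | cons hadj w' =>
      refine ⟨_, hadj, ?_⟩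
      have := SimpleGraph.dist_le w'
      simp only [SimpleGraph.Walk.length_cons] at hw
      omega
  choose! f hf1 hf2 using hex
  refine ⟨fun x => if x = 0 then 0 else f x, ?_⟩
  have hp : IsRootedForest {0} ∅ (fun x : Fin (n + 1) => if x = 0 then 0 else f x) := by
    refine ⟨by simp, by simp, fun x => t.dist x 0, fun x hx => ?_⟩
    have hx : x ≠ 0 := by simpa using hx
    simpa [hx] using hf2 x hx
  refine ⟨hp, ?_⟩
  have hle : parentGraph (fun x : Fin (n + 1) => if x = 0 then 0 else f x) ≤ t := by
    have aux : ∀ x y : Fin (n + 1), x ≠ y → (if x = 0 then 0 else f x) = y → t.Adj x y := by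
      intro x y hxy h
      split_ifs at h with h0
      · exact absurd (h0.trans h) hxy
      · exact h ▸ hf1 x h0
    rintro x y ⟨hxy, h | h⟩
    · exact aux x y hxy h
    · exact (aux y x hxy.symm h).symm
  -- two trees on the same vertex set have the same number of edges
  have c1 := (SimpleGraph.isTree_iff_connected_and_card.1 (parentGraph_isTree hp)).2
  have c2 := (SimpleGraph.isTree_iff_connected_and_card.1 ht).2
  have := Set.eq_of_subset_of_ncard_le (SimpleGraph.edgeSet_mono hle)
    (by rw [← Nat.card_coe_set_eq, ← Nat.card_coe_set_eq]; omega)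
  exact SimpleGraph.edgeSet_inj.1 this

lemma deg_zero_parentGraph (hp : IsRootedForest {0} ∅ p) :
    ((parentGraph p).neighborSet 0).ncard = #{x | x ≠ 0 ∧ p x = 0} := by
  have h0 : p 0 = 0 := hp.1 0 (by simp)
  rw [← Set.ncard_coe_finset]
  congr 1
  ext x
  simp only [SimpleGraph.mem_neighborSet, parentGraph, h0, coe_filter, mem_univ, true_and,
    Set.mem_ofPred_eq]
  constructor
  · rintro ⟨h1, h2 | h2⟩
    · exact absurd h2 h1
    · exact ⟨h1.symm, h2⟩
  · rintro ⟨h1, h2⟩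
    exact ⟨h1.symm, Or.inr h2⟩

lemma deg_parentGraph (hp : IsRootedForest {0} ∅ p) {v : Fin (n + 1)} (hv : v ≠ 0) :
    ((parentGraph p).neighborSet v).ncard = #{x | x ≠ v ∧ p x = v} + 1 := by
  have hne : ∀ x, x ≠ 0 → p x ≠ x := fun x hx => hp.ne_self (by simpa using hx)
  obtain ⟨h0, -, r, hr⟩ := hp
  simp only [mem_singleton, forall_eq] at h0 hr
  have hnot : p v ∉ ({x | x ≠ v ∧ p x = v} : Finset (Fin (n + 1))) := by
    simp only [mem_filter, mem_univ, true_and, not_and]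
    intro _ hc
    by_cases hz : p v = 0
    · rw [hz, h0] at hc
      exact hv hc.symm
    · have a1 := hr v hv
      have a2 := hr _ hz
      rw [hc] at a2
      omega
  rw [← Finset.card_insert_of_notMem hnot, ← Set.ncard_coe_finset]
  congr 1
  ext x
  simp only [SimpleGraph.mem_neighborSet, parentGraph, coe_insert, coe_filter, mem_univ, true_and,
    Set.mem_ofPred_eq, Set.mem_insert_iff]
  constructor
  · rintro ⟨h1, h2 | h2⟩
    · exact Or.inl h2.symm
    · exact Or.inr ⟨h1.symm, h2⟩
  · rintro (rfl | ⟨h1, h2⟩)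
    · exact ⟨(hne v hv).symm, Or.inl rfl⟩
    · exact ⟨h1.symm, Or.inr h2⟩

/-- `w` is a child of `y`, for the parent function `p`, with a larger label. -/
def upChild (p : Fin (n + 1) → Fin (n + 1)) (y w : Fin (n + 1)) : Prop := p w = y ∧ y < w

/-- On the greedy path from the root the parent of a vertex has a smaller label, so the upward
neighbours are exactly the upward children. -/
lemma greedyLast_parentGraph_eq_iff (hp : IsRootedForest {0} ∅ p) (v : Fin (n + 1)) :
    greedyLast (parentGraph p) 0 = v ↔ GEnd (upChild p) 0 v := by
  have h0 : p 0 = 0 := hp.1 0 (by simp)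
  have tr : ∀ u, GEnd (upAdj (parentGraph p)) 0 u → GEnd (upChild p) 0 u := by
    intro u hu
    have hup : ∀ y w, p y ≤ y → upAdj (parentGraph p) y w → p w = y := by
      rintro y w hy ⟨⟨-, h | h⟩, hlt⟩
      · rw [h] at hy
        exact absurd hlt (not_lt.2 hy)
      · exact h
    refine GEnd.transfer (fun y => p y ≤ y) (by simp [h0]) ?_ ?_ hu
    · intro y w hy h
      rw [hup y w hy h]
      exact h.2.le
    · intro y w hy
      exact ⟨fun h => ⟨hup y w hy h, h.2⟩, fun h => ⟨⟨h.2.ne, Or.inr h.1⟩, h.2⟩⟩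
  rw [greedyLast_eq_iff]
  refine ⟨tr v, fun h => ?_⟩
  have h1 := GEnd_greedyLast (parentGraph p) 0
  rwa [(tr _ h1).unique h] at h1

end Graph

/-! ### Cutting the edge above the last vertex -/

section Cut

variable {n : ℕ}

/-- `w` is a child of `y` with a label between those of `y` and `v`. -/
def upChildBelow (v : Fin (n + 1)) (q : Fin (n + 1) → Fin (n + 1)) (y w : Fin (n + 1)) : Prop :=
  q w = y ∧ y < w ∧ w < v

/-- The greedy path ends at `v` exactly when no child of `v` is larger than `v` and the parent of `v`
is the end of the greedy path truncated at `v` in the forest obtained by cutting above `v`. -/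
lemma GEnd_upChild_iff {p : Fin (n + 1) → Fin (n + 1)} {v : Fin (n + 1)} (hv : v ≠ 0) :
    GEnd (upChild p) 0 v ↔
      (∀ x, x ≠ v → p x = v → x < v) ∧
        GEnd (upChildBelow v (Function.update p v v)) 0 (p v) := by
  have hv0 : 0 < v := Fin.pos_iff_ne_zero.2 hv
  constructor
  · rintro ⟨h1, h2⟩
    refine ⟨fun x hx hpx => (lt_or_gt_of_ne hx).resolve_right fun h => h2 x ⟨hpx, h⟩, ?_⟩
    have aux : ∀ y, Relation.ReflTransGen (GStep (upChild p)) 0 y → y < v →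
        Relation.ReflTransGen (GStep (upChildBelow v (Function.update p v v))) 0 y := by
      intro y hy
      induction hy with
      | refl => exact fun _ => .refl
      | @tail b c _ hbc ih =>
        intro hc
        have hbv : b < v := hbc.1.2.trans hc
        refine (ih hbv).tail ⟨⟨?_, hbc.1.2, hc⟩, ?_⟩
        · rw [Function.update_of_ne hc.ne]
          exact hbc.1.1
        · rintro z ⟨hz1, hz2, hz3⟩
          rw [Function.update_of_ne hz3.ne] at hz1
          exact hbc.2 z ⟨hz1, hz2⟩
    rcases Relation.ReflTransGen.cases_tail h1 with h3 | ⟨y, hy, hyv⟩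
    · exact absurd h3 hv
    · obtain ⟨⟨hpv, hlt⟩, hmin⟩ := hyv
      rw [hpv]
      refine ⟨aux y hy hlt, ?_⟩
      rintro z ⟨hz1, hz2, hz3⟩
      rw [Function.update_of_ne hz3.ne] at hz1
      exact absurd hz3 (not_lt.2 (hmin z ⟨hz1, hz2⟩))
  · rintro ⟨hch, h1, h2⟩
    have aux : ∀ y, Relation.ReflTransGen
        (GStep (upChildBelow v (Function.update p v v))) 0 y →
        Relation.ReflTransGen (GStep (upChild p)) 0 y ∧ y < v := by
      intro y hy
      induction hy with
      | refl => exact ⟨.refl, hv0⟩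
      | @tail b c _ hbc ih =>
        obtain ⟨⟨hc1, hc2, hc3⟩, hmin⟩ := hbc
        rw [Function.update_of_ne hc3.ne] at hc1
        refine ⟨ih.1.tail ⟨⟨hc1, hc2⟩, ?_⟩, hc3⟩
        rintro z ⟨hz1, hz2⟩
        rcases lt_or_ge z v with hz | hz
        · exact hmin z ⟨by rwa [Function.update_of_ne hz.ne], hz2, hz⟩
        · exact hc3.le.trans hz
    obtain ⟨h3, h4⟩ := aux _ h1
    refine ⟨h3.tail ⟨⟨rfl, h4⟩, ?_⟩, ?_⟩
    · rintro z ⟨hz1, hz2⟩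
      by_contra hlt
      rw [not_le] at hlt
      exact h2 z ⟨by rwa [Function.update_of_ne hlt.ne], hz2, hlt⟩
    · rintro z ⟨hz1, hz2⟩
      exact lt_asymm hz2 (hch z hz2.ne' hz1)

lemma exists_truncEnd (v : Fin (n + 1)) (q : Fin (n + 1) → Fin (n + 1)) :
    ∃ u, GEnd (upChildBelow v q) 0 u :=
  GEnd.exists (fun _ _ h => h.2.1) 0

/-- The end of the greedy path of `q` from `0` in which only labels below `v` are used. -/
noncomputable def truncEnd (v : Fin (n + 1)) (q : Fin (n + 1) → Fin (n + 1)) : Fin (n + 1) :=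
  (exists_truncEnd v q).choose

lemma truncEnd_spec (v : Fin (n + 1)) (q : Fin (n + 1) → Fin (n + 1)) :
    GEnd (upChildBelow v q) 0 (truncEnd v q) :=
  (exists_truncEnd v q).choose_spec

lemma truncEnd_eq_zero_iff (v : Fin (n + 1)) (q : Fin (n + 1) → Fin (n + 1)) :
    truncEnd v q = 0 ↔ ∀ x, x ≠ 0 → q x = 0 → v ≤ x := by
  constructor
  · intro h x hx hqx
    have := (truncEnd_spec v q).2 x
    rw [h] at this
    by_contra hlt
    exact this ⟨hqx, Fin.pos_iff_ne_zero.2 hx, not_le.1 hlt⟩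
  · intro h
    refine (truncEnd_spec v q).unique ⟨.refl, ?_⟩
    rintro z ⟨h1, h2, h3⟩
    exact absurd h3 (not_lt.2 (h z h2.ne' h1))

lemma IsRootedForest.cut {p : Fin (n + 1) → Fin (n + 1)} {v : Fin (n + 1)}
    (hp : IsRootedForest {0} ∅ p) :
    IsRootedForest {0, v} ∅ (Function.update p v v) := by
  obtain ⟨h0, -, r, hr⟩ := hp
  simp only [mem_singleton, forall_eq] at h0 hr
  refine ⟨?_, by simp, r, ?_⟩
  · intro c hc
    by_cases hcv : c = v
    · rw [hcv, Function.update_self]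
    · rw [Function.update_of_ne hcv]
      simp only [mem_insert, mem_singleton, hcv, or_false] at hc
      rw [hc, h0]
  · intro x hx
    simp only [mem_insert, mem_singleton, not_or] at hx
    rw [Function.update_of_ne hx.2]
    exact hr x hx.1

/-- Attaching `v` to the end of the truncated path creates no cycle, since this path starts at `0` and
never enters the tree rooted at `v`. -/
lemma IsRootedForest.graft {q : Fin (n + 1) → Fin (n + 1)} {v : Fin (n + 1)} (hv : v ≠ 0)
    (hq : IsRootedForest {0, v} ∅ q) :
    IsRootedForest {0} ∅ (Function.update q v (truncEnd v q)) := by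
  classical
  obtain ⟨h0, -, r, hr⟩ := hq
  have hq0 : q 0 = 0 := h0 0 (by simp)
  have hqv : q v = v := h0 v (by simp)
  -- `S` is the tree hanging from `v`
  let S : Set (Fin (n + 1)) := {x | ∃ k, q^[k] x = v}
  have hS : ∀ x, q x ∈ S ↔ x ∈ S := by
    intro x
    constructor
    · rintro ⟨k, hk⟩
      exact ⟨k + 1, hk⟩
    · rintro ⟨k, hk⟩
      refine ⟨k, ?_⟩
      rw [← Function.iterate_succ_apply, Function.iterate_succ_apply', hk, hqv]
  have h0S : (0 : Fin (n + 1)) ∉ S := by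
    rintro ⟨k, hk⟩
    rw [Function.iterate_fixed hq0] at hk
    exact hv hk.symm
  have hvS : v ∈ S := ⟨0, rfl⟩
  have huS : truncEnd v q ∉ S := by
    have hreach := (truncEnd_spec v q).1
    generalize truncEnd v q = u at hreach
    induction hreach with
    | refl => exact h0S
    | tail _ hbc ih =>
      rw [← hS, hbc.1.1]
      exact ih
  -- lifting the tree rooted at `v` above all other heights yields a height function
  obtain ⟨K, hK⟩ : ∃ K, ∀ x, r x < K := by
    refine ⟨univ.sup r + 1, fun x => Nat.lt_succ_of_le (Finset.le_sup (mem_univ x))⟩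
  refine ⟨?_, by simp, fun x => r x + if x ∈ S then K else 0, ?_⟩
  · simp only [mem_singleton, forall_eq]
    rw [Function.update_of_ne hv.symm, hq0]
  · intro x hx
    rw [mem_singleton] at hx
    by_cases hxv : x = v
    · subst hxv
      rw [Function.update_self]
      simp only [huS, hvS, if_true, if_false]
      have := hK (truncEnd x q)
      omega
    · rw [Function.update_of_ne hxv]
      simp only [hS x]
      exact Nat.add_lt_add_right (hr x (by simp [hx, hxv])) _

/-- The children of `c`; the condition `x ≠ c` excludes `c` itself when `c` is a root. -/
def children (c : Fin (n + 1)) (q : Fin (n + 1) → Fin (n + 1)) : Finset (Fin (n + 1)) :=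
  {x | x ≠ c ∧ q x = c}

lemma mem_children {c x : Fin (n + 1)} {q : Fin (n + 1) → Fin (n + 1)} :
    x ∈ children c q ↔ x ≠ c ∧ q x = c := by
  simp [children]

/-- The possible pairs (children of `0`, children of `v`) in the cut forest when `0` and `v` are
adjacent in the tree: `v` is then the smallest child of `0`. The tree has `a + 1` children of `0` and
`b` children of `v`. -/
def pairsAdj (a b : ℕ) (v : Fin (n + 1)) : Finset (Finset (Fin (n + 1)) × Finset (Fin (n + 1))) :=
  {P | P.1 ⊆ Ioi v ∧ #P.1 = a ∧ P.2 ⊆ Ioo 0 v ∧ #P.2 = b}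

/-- The possible pairs (children of `0`, children of `v`) in the cut forest when `0` and `v` are not
adjacent in the tree: some child of `0` is then smaller than `v`. The tree has `a + 1` children of `0`
and `b` children of `v`. -/
def pairsFar (a b : ℕ) (v : Fin (n + 1)) : Finset (Finset (Fin (n + 1)) × Finset (Fin (n + 1))) :=
  {P | P.1 ⊆ ({0, v} ∪ P.2)ᶜ ∧ ¬ P.1 ⊆ Ioi v ∧ #P.1 = a + 1 ∧ P.2 ⊆ Ioo 0 v ∧ #P.2 = b}

lemma disjoint_pairs (a b : ℕ) (v : Fin (n + 1)) :
    Disjoint (pairsAdj a b v) (pairsFar a b v) := by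
  rw [Finset.disjoint_left]
  intro P h1 h2
  simp only [pairsAdj, pairsFar, mem_filter, mem_univ, true_and] at h1 h2
  exact h2.2.1 h1.1

open Classical in
/-- Trees whose greedy path ends at `v` correspond to two-rooted forests, by cutting above `v`. -/
lemma card_cut {v : Fin (n + 1)} (hv : v ≠ 0) (a b : ℕ) :
    #{p ∈ rootedForests ({0} : Finset (Fin (n + 1))) ∅ | GEnd (upChild p) 0 v ∧
        #(children 0 p) = a + 1 ∧ #(children v p) = b} =
      #{q ∈ rootedForests ({0, v} : Finset (Fin (n + 1))) ∅ |
        (children 0 q, children v q) ∈ pairsAdj a b v ∪ pairsFar a b v} := by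
  have hv0 : 0 < v := Fin.pos_iff_ne_zero.2 hv
  -- the correspondence, for a tree `p` and the forest `q` obtained by cutting above `v`
  have key : ∀ p q : Fin (n + 1) → Fin (n + 1), IsRootedForest {0} ∅ p → IsRootedForest {0, v} ∅ q →
      q = Function.update p v v → p v = truncEnd v q →
      ((∀ x, x ≠ v → p x = v → x < v) ∧ #(children 0 p) = a + 1 ∧ #(children v p) = b ↔
        (children 0 q, children v q) ∈ pairsAdj a b v ∪ pairsFar a b v) := by
    intro p q hp hq hqp hpv
    have hp0 : p 0 = 0 := hp.1 0 (by simp)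
    have hqne : ∀ x, x ≠ v → q x = p x := fun x hx => by rw [hqp, Function.update_of_ne hx]
    have hqv : q v = v := by rw [hqp, Function.update_self]
    have hB : children v p = children v q := by
      ext x
      simp only [mem_children, and_congr_right_iff]
      intro hx
      rw [hqne x hx]
    have hBsub : (∀ x, x ≠ v → p x = v → x < v) ↔ children v q ⊆ Ioo 0 v := by
      rw [← hB]
      constructor
      · intro h x hx
        rw [mem_children] at hx
        refine mem_Ioo.2 ⟨Fin.pos_iff_ne_zero.2 ?_, h x hx.1 hx.2⟩
        rintro rfl
        exact hv (hx.2.symm.trans hp0)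
      · intro h x hx hpx
        exact (mem_Ioo.1 (h (mem_children.2 ⟨hx, hpx⟩))).2
    have hvA : v ∉ children 0 q := by
      rw [mem_children, hqv]
      exact fun h => hv h.2
    have hA2 : children 0 q ⊆ ({0, v} ∪ children v q)ᶜ := by
      intro x hx
      have h1 := mem_children.1 hx
      have h2 : x ≠ v := fun h => hvA (h ▸ hx)
      simp only [mem_compl, mem_union, mem_insert, mem_singleton, mem_children, not_or]
      exact ⟨⟨h1.1, h2⟩, fun h => hv (h.2.symm.trans h1.2)⟩
    have hsub : p v = 0 ↔ children 0 q ⊆ Ioi v := by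
      rw [hpv, truncEnd_eq_zero_iff]
      constructor
      · intro h x hx
        have h1 := mem_children.1 hx
        exact mem_Ioi.2 (lt_of_le_of_ne (h x h1.1 h1.2) fun he => hvA (he ▸ hx))
      · intro h x hx hqx
        exact (mem_Ioi.1 (h (mem_children.2 ⟨hx, hqx⟩))).le
    have hAp : children 0 p = if p v = 0 then insert v (children 0 q) else children 0 q := by
      ext x
      by_cases hxv : x = v
      · subst hxv
        split_ifs with h
        · simp [mem_children, hv, h]
        · simp [mem_children, h, hqv, hv]
      · split_ifs with h
        · simp [mem_children, hqne x hxv, hxv]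
        · simp [mem_children, hqne x hxv]
    simp only [mem_union, pairsAdj, pairsFar, mem_filter, mem_univ, true_and]
    rw [hBsub, hB, hAp]
    by_cases h : p v = 0
    · have h' := hsub.1 h
      rw [if_pos h, Finset.card_insert_of_notMem hvA]
      simp only [h', not_true, false_and, and_false, or_false, true_and, Nat.add_right_cancel_iff]
      tauto
    · have h' : ¬ children 0 q ⊆ Ioi v := fun hh => h (hsub.2 hh)
      rw [if_neg h]
      simp only [h', hA2, not_false_eq_true, false_and, false_or, true_and]
      tauto
  refine Finset.card_bij' (fun p _ => Function.update p v v)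
    (fun q _ => Function.update q v (truncEnd v q)) ?_ ?_ ?_ ?_
  · intro p hp
    simp only [mem_filter, mem_rootedForests] at hp ⊢
    obtain ⟨hp1, hp2, hp3⟩ := hp
    rw [GEnd_upChild_iff hv] at hp2
    exact ⟨hp1.cut, (key p _ hp1 hp1.cut rfl (hp2.2.unique (truncEnd_spec _ _))).1 ⟨hp2.1, hp3⟩⟩
  · intro q hq
    simp only [mem_filter, mem_rootedForests] at hq ⊢
    obtain ⟨hq1, hq2⟩ := hq
    have hqv : q v = v := hq1.1 v (by simp)
    have hup : Function.update (Function.update q v (truncEnd v q)) v v = q := by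
      rw [Function.update_idem]
      exact Function.update_eq_self_iff.2 hqv.symm
    have := (key _ q (hq1.graft hv) hq1 hup.symm (Function.update_self ..)).2 hq2
    refine ⟨hq1.graft hv, (GEnd_upChild_iff hv).2 ⟨this.1, ?_⟩, this.2⟩
    rw [hup, Function.update_self]
    exact truncEnd_spec v q
  · intro p hp
    simp only [mem_filter, mem_rootedForests] at hp
    have hp2 := ((GEnd_upChild_iff hv).1 hp.2.1).2
    rw [Function.update_idem]
    exact Function.update_eq_self_iff.2 ((truncEnd_spec _ _).unique hp2)
  · intro q hq
    simp only [mem_filter, mem_rootedForests] at hq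
    rw [Function.update_idem]
    exact Function.update_eq_self_iff.2 (hq.1.1 v (by simp)).symm

end Cut

/-! ### Counting -/

section Count

variable {n : ℕ}

open Classical in
/-- The number of forests rooted at `0` and `v` in which these have the child sets `A` and `B`. -/
lemma card_children_eq {v : Fin (n + 1)} (hv : v ≠ 0) {A B : Finset (Fin (n + 1))}
    (hA : A ⊆ ({0, v} : Finset (Fin (n + 1)))ᶜ) (hB : B ⊆ ({0, v} : Finset (Fin (n + 1)))ᶜ)
    (hAB : Disjoint A B) :
    (n - 1) * #{q ∈ rootedForests ({0, v} : Finset (Fin (n + 1))) ∅ |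
        (children 0 q, children v q) = (A, B)} =
      (#A + #B) * (n - 1) ^ (n - 1 - (#A + #B)) := by
  have hdisj : Disjoint (A ∪ B) ({0, v} : Finset (Fin (n + 1))) :=
    Finset.disjoint_left.2 fun x hx => by
      have := (Finset.union_subset hA hB) hx
      simpa only [mem_compl] using this
  have hcl : #{q ∈ rootedForests ({0, v} : Finset (Fin (n + 1))) ∅ |
        (children 0 q, children v q) = (A, B)} =
      #(rootedForests (({0, v} : Finset (Fin (n + 1))) ∪ (A ∪ B)) {0, v}) := by
    rw [← card_layer (D := ∅) (Finset.empty_subset _) hdisj (fun x => if x ∈ B then v else 0)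
      (by intro x _; split_ifs <;> simp)]
    congr 1
    ext q
    simp only [mem_filter, and_congr_right_iff, mem_rootedForests, Prod.mk.injEq]
    intro hq
    have hq0 : q 0 = 0 := hq.1 0 (by simp)
    have hqv : q v = v := hq.1 v (by simp)
    constructor
    · rintro ⟨rfl, rfl⟩ x hx
      simp only [mem_insert, mem_singleton, not_or] at hx
      simp only [mem_union, mem_children, mem_insert, mem_singleton, hx.1, hx.2, ne_eq,
        not_false_eq_true, true_and]
      refine ⟨fun h => ?_, fun h => h⟩
      split_ifs with h1
      · exact h1
      · exact h.resolve_right h1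
    · intro h
      have hAx : ∀ x ∈ A, x ∉ ({0, v} : Finset (Fin (n + 1))) := fun x hx => by
        simpa only [mem_compl] using hA hx
      have hBx : ∀ x ∈ B, x ∉ ({0, v} : Finset (Fin (n + 1))) := fun x hx => by
        simpa only [mem_compl] using hB hx
      have hqA : ∀ x ∈ A, q x = 0 := fun x hx => by
        rw [(h x (hAx x hx)).1 (mem_union_left _ hx), if_neg (Finset.disjoint_left.1 hAB hx)]
      have hqB : ∀ x ∈ B, q x = v := fun x hx => by
        rw [(h x (hBx x hx)).1 (mem_union_right _ hx), if_pos hx]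
      constructor
      · ext x
        rw [mem_children]
        constructor
        · rintro ⟨h1, h2⟩
          have hxC : x ∉ ({0, v} : Finset (Fin (n + 1))) := by
            simp only [mem_insert, mem_singleton, h1, false_or]
            rintro rfl
            exact hv (hqv.symm.trans h2)
          by_contra hxA
          by_cases hxB : x ∈ B
          · exact hv ((hqB x hxB).symm.trans h2)
          · exact (h x hxC).2 (by simp [hxA, hxB]) (by simp [h2])
        · intro hx
          exact ⟨fun h0 => hAx x hx (by simp [h0]), hqA x hx⟩
      · ext x
        rw [mem_children]
        constructor
        · rintro ⟨h1, h2⟩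
          have hxC : x ∉ ({0, v} : Finset (Fin (n + 1))) := by
            simp only [mem_insert, mem_singleton, h1, or_false]
            rintro rfl
            exact hv (h2.symm.trans hq0)
          by_contra hxB
          by_cases hxA : x ∈ A
          · exact hv (h2.symm.trans (hqA x hxA))
          · exact (h x hxC).2 (by simp [hxA, hxB]) (by simp [h2])
        · intro hx
          exact ⟨fun h0 => hBx x hx (by simp [h0]), hqB x hx⟩
  have hCc : #({0, v} : Finset (Fin (n + 1))) = 2 := Finset.card_pair hv.symm
  have hABc : #(A ∪ B) = #A + #B := Finset.card_union_of_disjoint hAB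
  have htot : #(({0, v} : Finset (Fin (n + 1))) ∪ (A ∪ B)) = 2 + (#A + #B) := by
    rw [Finset.card_union_of_disjoint hdisj.symm, hCc, hABc]
  have hle : 2 + (#A + #B) ≤ n + 1 := by
    rw [← htot]
    simpa using Finset.card_le_univ (({0, v} : Finset (Fin (n + 1))) ∪ (A ∪ B))
  have hcompl : #(({0, v} : Finset (Fin (n + 1))) ∪ (A ∪ B))ᶜ = n - 1 - (#A + #B) := by
    rw [Finset.card_compl, htot, Fintype.card_fin]
    omega
  have := card_rootedForests _ (C := ({0, v} : Finset (Fin (n + 1))) ∪ (A ∪ B)) (D := {0, v})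
    Finset.subset_union_left hcompl
  rw [Finset.union_sdiff_left, Finset.sdiff_eq_self_of_disjoint hdisj, hABc,
    Nat.sub_add_cancel (by omega)] at this
  rw [hcl, this]

open Classical in
lemma card_pairs_mul {v : Fin (n + 1)} (hv : v ≠ 0)
    (T : Finset (Finset (Fin (n + 1)) × Finset (Fin (n + 1)))) (r : ℕ)
    (hT : ∀ P ∈ T, P.1 ⊆ ({0, v} : Finset (Fin (n + 1)))ᶜ ∧
      P.2 ⊆ ({0, v} : Finset (Fin (n + 1)))ᶜ ∧ Disjoint P.1 P.2 ∧ #P.1 + #P.2 = r) :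
    (n - 1) * #{q ∈ rootedForests ({0, v} : Finset (Fin (n + 1))) ∅ |
        (children 0 q, children v q) ∈ T} = #T * (r * (n - 1) ^ (n - 1 - r)) := by
  rw [Finset.card_eq_sum_card_fiberwise (f := fun q => (children 0 q, children v q)) (t := T),
    Finset.mul_sum, Finset.card_eq_sum_ones T, Finset.sum_mul]
  · refine Finset.sum_congr rfl fun P hP => ?_
    obtain ⟨h1, h2, h3, h4⟩ := hT P hP
    rw [one_mul, ← h4, ← card_children_eq hv h1 h2 h3, Finset.filter_filter]
    congr 2
    ext q
    simp only [mem_filter, and_congr_right_iff]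
    intro _
    exact ⟨fun h => h.2, fun h => ⟨h ▸ hP, h⟩⟩
  · intro q hq
    exact (mem_filter.1 hq).2

lemma Ioo_subset_compl (v : Fin (n + 1)) : Ioo 0 v ⊆ ({0, v} : Finset (Fin (n + 1)))ᶜ := by
  intro x hx
  rw [mem_Ioo] at hx
  simp [hx.1.ne', hx.2.ne]

lemma Ioi_subset_compl (v : Fin (n + 1)) : Ioi v ⊆ ({0, v} : Finset (Fin (n + 1)))ᶜ := by
  intro x hx
  rw [mem_Ioi] at hx
  simp [hx.ne', ((Fin.zero_le v).trans_lt hx).ne']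

open Classical in
lemma card_last_eq {v : Fin (n + 1)} (hv : v ≠ 0) (a b : ℕ) :
    (n - 1) * #{p ∈ rootedForests ({0} : Finset (Fin (n + 1))) ∅ | GEnd (upChild p) 0 v ∧
        #(children 0 p) = a + 1 ∧ #(children v p) = b} =
      #(pairsAdj a b v) * ((a + b) * (n - 1) ^ (n - 1 - (a + b))) +
      #(pairsFar a b v) * ((a + 1 + b) * (n - 1) ^ (n - 1 - (a + 1 + b))) := by
  rw [card_cut hv, ← card_pairs_mul hv (pairsAdj a b v), ← card_pairs_mul hv (pairsFar a b v),
    ← mul_add]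
  · congr 1
    rw [← Finset.card_union_of_disjoint]
    · congr 1
      ext q
      simp only [mem_filter, mem_union]
      tauto
    · rw [Finset.disjoint_filter]
      intro q _ h1 h2
      exact Finset.disjoint_left.1 (disjoint_pairs a b v) h1 h2
  · intro P hP
    simp only [pairsFar, mem_filter, mem_univ, true_and] at hP
    obtain ⟨h1, -, h3, h4, h5⟩ := hP
    rw [Finset.compl_union] at h1
    refine ⟨h1.trans Finset.inter_subset_left, h4.trans (Ioo_subset_compl v), ?_, by omega⟩
    exact Finset.disjoint_left.2 fun x hx => by simpa using (mem_inter.1 (h1 hx)).2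
  · intro P hP
    simp only [pairsAdj, mem_filter, mem_univ, true_and] at hP
    obtain ⟨h1, h3, h4, h5⟩ := hP
    refine ⟨h1.trans (Ioi_subset_compl v), h4.trans (Ioo_subset_compl v), ?_, by omega⟩
    refine Finset.disjoint_left.2 fun x hx hx' => ?_
    exact lt_asymm (mem_Ioi.1 (h1 hx)) (mem_Ioo.1 (h4 hx')).2

lemma card_pairsAdj (a b : ℕ) (k : Fin n) :
    #(pairsAdj a b k.succ) = k.val.choose b * (n - 1 - k.val).choose a := by
  have : pairsAdj a b k.succ = powersetCard a (Ioi k.succ) ×ˢ powersetCard b (Ioo 0 k.succ) := by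
    ext P
    simp only [pairsAdj, mem_filter, mem_univ, true_and, mem_product, mem_powersetCard]
    tauto
  rw [this, Finset.card_product, card_powersetCard, card_powersetCard, Fin.card_Ioi, Fin.card_Ioo,
    mul_comm]
  congr 2
  simp only [Fin.val_succ]
  omega

/-- Given `B`, the set `A` is any `(a + 1)`-subset of the `n - 1 - b` remaining labels, except the
subsets of the labels above `v = k.succ`. -/
lemma card_pairsFar (a b : ℕ) (k : Fin n) :
    #(pairsFar a b k.succ) + k.val.choose b * (n - 1 - k.val).choose (a + 1) =
      k.val.choose b * (n - 1 - b).choose (a + 1) := by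
  classical
  have hb : #(Ioo 0 k.succ) = k.val := by simp [Fin.card_Ioo]
  have hfib : #(pairsFar a b k.succ) = ∑ B ∈ powersetCard b (Ioo 0 k.succ),
      #(powersetCard (a + 1) ({0, k.succ} ∪ B)ᶜ \ powersetCard (a + 1) (Ioi k.succ)) := by
    rw [Finset.card_eq_sum_card_fiberwise (f := Prod.snd) (t := powersetCard b (Ioo 0 k.succ))]
    · refine Finset.sum_congr rfl fun B hB => ?_
      rw [mem_powersetCard] at hB
      refine Finset.card_bij' (fun P _ => P.1) (fun A _ => (A, B)) ?_ ?_ ?_ ?_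
      · rintro ⟨A, B'⟩ hP
        simp only [pairsFar, mem_filter, mem_univ, true_and] at hP
        obtain ⟨⟨h1, h2, h3, -⟩, rfl⟩ := hP
        simp only [mem_sdiff, mem_powersetCard]
        exact ⟨⟨h1, h3⟩, fun h => h2 h.1⟩
      · intro A hA
        simp only [mem_sdiff, mem_powersetCard] at hA
        simp only [pairsFar, mem_filter, mem_univ, true_and, and_true]
        exact ⟨hA.1.1, fun h => hA.2 ⟨h, hA.1.2⟩, hA.1.2, hB⟩
      · rintro ⟨A, B'⟩ hP
        simp only [mem_filter] at hP
        rw [← hP.2]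
      · intro A _
        rfl
    · intro P hP
      simp only [pairsFar, coe_filter, mem_univ, true_and, Set.mem_ofPred_eq] at hP
      exact mem_powersetCard.2 hP.2.2.2
  have hterm : ∀ B ∈ powersetCard b (Ioo 0 k.succ),
      #(powersetCard (a + 1) ({0, k.succ} ∪ B)ᶜ \ powersetCard (a + 1) (Ioi k.succ)) +
        (n - 1 - k.val).choose (a + 1) = (n - 1 - b).choose (a + 1) := by
    intro B hB
    rw [mem_powersetCard] at hB
    have hdisj : Disjoint ({0, k.succ} : Finset (Fin (n + 1))) B :=
      Finset.disjoint_right.2 fun x hx => by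
        simpa only [mem_compl] using Ioo_subset_compl _ (hB.1 hx)
    have hsub : Ioi k.succ ⊆ (({0, k.succ} : Finset (Fin (n + 1))) ∪ B)ᶜ := by
      rw [Finset.compl_union]
      refine Finset.subset_inter (Ioi_subset_compl _) fun x hx => ?_
      rw [mem_compl]
      exact fun hxB => lt_asymm (mem_Ioi.1 hx) (mem_Ioo.1 (hB.1 hxB)).2
    have hi : #(Ioi k.succ) = n - 1 - k.val := by
      rw [Fin.card_Ioi, Fin.val_succ]
      omega
    have hc : #(({0, k.succ} : Finset (Fin (n + 1))) ∪ B)ᶜ = n - 1 - b := by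
      rw [Finset.card_compl, Finset.card_union_of_disjoint hdisj,
        Finset.card_pair (Fin.succ_ne_zero k).symm, Fintype.card_fin, hB.2]
      omega
    have := Finset.card_sdiff_add_card_eq_card (Finset.powersetCard_mono (n := a + 1) hsub)
    rwa [card_powersetCard, card_powersetCard, hi, hc] at this
  have hcard : #(powersetCard b (Ioo 0 k.succ)) = k.val.choose b := by
    rw [card_powersetCard, hb]
  rw [hfib, ← hcard, ← smul_eq_mul, ← smul_eq_mul, ← Finset.sum_const, ← Finset.sum_const,
    ← Finset.sum_add_distrib]
  exact Finset.sum_congr rfl hterm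

/-- Both sides count the `(b + c + 1)`-subsets of `{0, …, m}`, the left side according to the
element `k` with exactly `b` smaller elements in the subset. -/
lemma sum_choose_mul_choose (b c m : ℕ) :
    ∑ k ∈ range (m + 1), k.choose b * (m - k).choose c = (m + 1).choose (b + c + 1) := by
  induction m generalizing c with
  | zero =>
    rcases b with _ | b <;> rcases c with _ | c <;> simp [Nat.choose_eq_zero_of_lt]
  | succ m ih =>
    rw [Finset.sum_range_succ, Nat.sub_self]
    rcases c with _ | c
    · have h0 := ih 0
      simp only [Nat.choose_zero_right, mul_one, add_zero] at h0 ⊢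
      rw [h0, Nat.choose_succ_succ (m + 1) b, add_comm]
    · have hs : ∀ k ∈ range (m + 1), k.choose b * (m + 1 - k).choose (c + 1) =
          k.choose b * (m - k).choose c + k.choose b * (m - k).choose (c + 1) := by
        intro k hk
        rw [mem_range] at hk
        rw [Nat.succ_sub (by omega : k ≤ m), Nat.choose_succ_succ, mul_add]
      rw [Finset.sum_congr rfl hs, Finset.sum_add_distrib, ih, ih, Nat.choose_zero_succ, mul_zero,
        add_zero, ← add_assoc b c 1, ← Nat.choose_succ_succ]

lemma sum_pairsAdj (a b m : ℕ) :
    ∑ k : Fin (m + 1), #(pairsAdj a b k.succ) = (m + 1).choose (a + b + 1) := by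
  simp only [card_pairsAdj, Nat.add_sub_cancel]
  rw [Fin.sum_univ_eq_sum_range (fun k => k.choose b * (m - k).choose a), sum_choose_mul_choose,
    add_comm b a]

lemma sum_pairsFar (a b m : ℕ) :
    ∑ k : Fin (m + 1), #(pairsFar a b k.succ) + (m + 1).choose (a + b + 2) =
      (m + 1).choose (b + 1) * (m - b).choose (a + 1) := by
  have h1 := sum_choose_mul_choose b (a + 1) m
  have h2 := sum_choose_mul_choose b 0 m
  simp only [Nat.choose_zero_right, mul_one, add_zero] at h2
  rw [show a + b + 2 = b + (a + 1) + 1 by ring, ← h1, ← h2,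
    ← Fin.sum_univ_eq_sum_range (fun k => k.choose b * (m - k).choose (a + 1)),
    ← Finset.sum_add_distrib, Finset.sum_mul,
    ← Fin.sum_univ_eq_sum_range (fun k => k.choose b * (m - b).choose (a + 1))]
  refine Finset.sum_congr rfl fun k _ => ?_
  simpa using card_pairsFar a b k

open Classical in
/-- The trees of the theorem, sorted by the last vertex `k.succ` of the greedy path. -/
lemma card_trees (a b : ℕ) :
    Nat.card {t : SimpleGraph (Fin (n + 1)) // t.IsTree ∧ deg1 t = a + 1 ∧ deg2' t = b + 1} =
      ∑ k : Fin n, #{p ∈ rootedForests ({0} : Finset (Fin (n + 1))) ∅ |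
        GEnd (upChild p) 0 k.succ ∧ #(children 0 p) = a + 1 ∧ #(children k.succ p) = b} := by
  have hd : ∀ p : Fin (n + 1) → Fin (n + 1), IsRootedForest {0} ∅ p →
      (deg1 (parentGraph p) = a + 1 ∧ deg2' (parentGraph p) = b + 1 ↔
        ∃ k : Fin n, GEnd (upChild p) 0 k.succ ∧
          #(children 0 p) = a + 1 ∧ #(children k.succ p) = b) := by
    intro p hp
    have e1 : deg1 (parentGraph p) = #(children 0 p) := by
      simp only [deg1, Nat.succ_pos, dif_pos]
      exact deg_zero_parentGraph hp
    have e2 : deg2' (parentGraph p) =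
        ((parentGraph p).neighborSet (greedyLast (parentGraph p) 0)).ncard := by
      simp only [deg2', Nat.succ_pos, dif_pos]
      rfl
    have e3 : ∀ k : Fin n, ((parentGraph p).neighborSet k.succ).ncard =
        #(children k.succ p) + 1 := fun k => deg_parentGraph hp (Fin.succ_ne_zero k)
    rw [e1, e2]
    constructor
    · rintro ⟨h1, h2⟩
      have hend := (greedyLast_parentGraph_eq_iff hp _).1 rfl
      -- the root has a child, and every child of the root is a larger label
      have hne : greedyLast (parentGraph p) 0 ≠ 0 := by
        intro h0
        rw [h0] at hend
        obtain ⟨x, hx⟩ : (children 0 p).Nonempty := Finset.card_pos.1 (by omega)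
        rw [mem_children] at hx
        exact hend.2 x ⟨hx.2, Fin.pos_iff_ne_zero.2 hx.1⟩
      obtain ⟨k, hk⟩ := Fin.exists_succ_eq.2 hne
      rw [← hk] at hend h2
      rw [e3] at h2
      exact ⟨k, hend, h1, by omega⟩
    · rintro ⟨k, h1, h2, h3⟩
      rw [(greedyLast_parentGraph_eq_iff hp _).2 h1, e3, h3]
      exact ⟨h2, rfl⟩
  let S : Finset (Fin (n + 1) → Fin (n + 1)) := (univ : Finset (Fin n)).biUnion fun k =>
    {p ∈ rootedForests ({0} : Finset (Fin (n + 1))) ∅ |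
        GEnd (upChild p) 0 k.succ ∧ #(children 0 p) = a + 1 ∧ #(children k.succ p) = b}
  have hS : ∀ p, p ∈ S ↔ IsRootedForest {0} ∅ p ∧
      deg1 (parentGraph p) = a + 1 ∧ deg2' (parentGraph p) = b + 1 := by
    intro p
    simp only [S, mem_biUnion, mem_univ, true_and, mem_filter, mem_rootedForests]
    constructor
    · rintro ⟨k, h1, h2⟩
      exact ⟨h1, (hd p h1).2 ⟨k, h2⟩⟩
    · rintro ⟨h1, h2⟩
      obtain ⟨k, hk⟩ := (hd p h1).1 h2
      exact ⟨k, h1, hk⟩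
  rw [← Finset.card_biUnion]
  · change _ = #S
    rw [← Nat.card_eq_finsetCard S]
    refine (Nat.card_eq_of_bijective (fun p : S => ⟨parentGraph p.1,
      parentGraph_isTree ((hS p.1).1 p.2).1, ((hS p.1).1 p.2).2⟩) ⟨?_, ?_⟩).symm
    · intro p q hpq
      exact Subtype.ext (parentGraph_injective ((hS p.1).1 p.2).1 ((hS q.1).1 q.2).1
        (Subtype.ext_iff.1 hpq))
    · rintro ⟨t, ht, h1, h2⟩
      obtain ⟨p, hp, rfl⟩ := exists_parentGraph_eq ht
      exact ⟨⟨p, (hS p).2 ⟨hp, h1, h2⟩⟩, rfl⟩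
  · intro k _ l _ hkl
    rw [Function.onFun, Finset.disjoint_filter]
    intro p _ h1 h2
    exact hkl (Fin.succ_injective _ (h1.1.unique h2.1))

end Count

/-- Theorem 1.1 reformulated on Cayley trees: the joint law of `(deg_1, deg'_2)` on
uniform Cayley trees with `n+1` vertices. -/
theorem stmt_1 (i j n : ℕ) (hi : 1 ≤ i) (hj : 1 ≤ j) (hn : i + j ≤ n) :
    ((n : ℚ) - 1) *
      (Nat.card {t : SimpleGraph (Fin (n + 1)) //
        t.IsTree ∧ deg1 t = i ∧ deg2' t = j} : ℚ) =
    ((n.factorial : ℚ) / ((n - i - j).factorial : ℚ)) * ((n : ℚ) - 1) ^ (n - i - j) *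
      ( ((i : ℚ) + (j : ℚ) - 2) * ((n : ℚ) - 1) /
          ((((i + j - 1).factorial : ℚ)) * ((n : ℚ) - (i : ℚ) - (j : ℚ) + 1))
        + ((i : ℚ) + (j : ℚ) - 1) / ((i.factorial : ℚ) * (j.factorial : ℚ))
        - ((i : ℚ) + (j : ℚ) - 1) / (((i + j).factorial : ℚ)) ) := by
  obtain ⟨a, rfl⟩ := Nat.exists_eq_add_of_le' hi
  obtain ⟨b, rfl⟩ := Nat.exists_eq_add_of_le' hj
  obtain ⟨d, rfl⟩ := Nat.exists_eq_add_of_le hn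
  obtain ⟨m, hm⟩ : ∃ m, m = a + b + d + 1 := ⟨_, rfl⟩
  have hnm : a + 1 + (b + 1) + d = m + 1 := by omega
  -- `m = n - 1`, `i = a + 1`, `j = b + 1` and `d = n - i - j`
  have hcount : m * Nat.card {t : SimpleGraph (Fin (m + 1 + 1)) //
        t.IsTree ∧ deg1 t = a + 1 ∧ deg2' t = b + 1} =
      (m + 1).choose (a + b + 1) * ((a + b) * m ^ (d + 1)) +
      (∑ k : Fin (m + 1), #(pairsFar a b k.succ)) * ((a + b + 1) * m ^ d) := by
    rw [card_trees, Finset.mul_sum, ← sum_pairsAdj, Finset.sum_mul, Finset.sum_mul,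
      ← Finset.sum_add_distrib]
    refine Finset.sum_congr rfl fun k _ => ?_
    have := card_last_eq (Fin.succ_ne_zero k) a b
    rw [Nat.add_sub_cancel, show m - (a + b) = d + 1 by omega,
      show m - (a + 1 + b) = d by omega, show a + 1 + b = a + b + 1 by ring] at this
    exact this
  have hfar := sum_pairsFar a b m
  rw [hnm]
  generalize Nat.card {t : SimpleGraph (Fin (m + 1 + 1)) //
    t.IsTree ∧ deg1 t = a + 1 ∧ deg2' t = b + 1} = N at hcount ⊢
  generalize ∑ k : Fin (m + 1), #(pairsFar a b k.succ) = F at hcount hfar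
  have hfarQ : (F : ℚ) = (m + 1).choose (b + 1) * (m - b).choose (a + 1) -
      (m + 1).choose (a + b + 2) := by
    rw [eq_sub_iff_add_eq]
    exact_mod_cast hfar
  have hcountQ : (m : ℚ) * N = (m + 1).choose (a + b + 1) * ((a + b) * m ^ (d + 1)) +
      F * ((a + b + 1) * m ^ d) := by exact_mod_cast hcount
  have c1 : ((m + 1).choose (a + b + 1) : ℚ) =
      (m + 1).factorial / ((a + b + 1).factorial * ((d + 1) * d.factorial)) := by
    rw [Nat.cast_choose ℚ (by omega), show m + 1 - (a + b + 1) = d + 1 by omega,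
      Nat.factorial_succ d]
    push_cast
    rfl
  have c2 : ((m + 1).choose (a + b + 2) : ℚ) =
      (m + 1).factorial / ((a + b + 2).factorial * d.factorial) := by
    rw [Nat.cast_choose ℚ (by omega), show m + 1 - (a + b + 2) = d by omega]
  have c3 : ((m + 1).choose (b + 1) : ℚ) * (m - b).choose (a + 1) =
      (m + 1).factorial / ((a + 1).factorial * (b + 1).factorial * d.factorial) := by
    rw [Nat.cast_choose ℚ (by omega), Nat.cast_choose ℚ (by omega),
      show m + 1 - (b + 1) = m - b by omega, show m - b - (a + 1) = d by omega]
    have h1 : ((m - b).factorial : ℚ) ≠ 0 := by exact_mod_cast Nat.factorial_ne_zero _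
    have h2 : ((b + 1).factorial : ℚ) ≠ 0 := by exact_mod_cast Nat.factorial_ne_zero _
    have h3 : ((a + 1).factorial : ℚ) ≠ 0 := by exact_mod_cast Nat.factorial_ne_zero _
    have h4 : (d.factorial : ℚ) ≠ 0 := by exact_mod_cast Nat.factorial_ne_zero _
    field_simp
  have hsub : ((m + 1 : ℕ) : ℚ) - 1 = m := by push_cast; ring
  have hd1 : ((m + 1 : ℕ) : ℚ) - ((a + 1 : ℕ) : ℚ) - ((b + 1 : ℕ) : ℚ) + 1 = d + 1 := by
    rw [hm]; push_cast; ring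
  rw [hd1, hsub, hcountQ, hfarQ, c3, c1, c2, show m + 1 - (a + 1) - (b + 1) = d by omega,
    show a + 1 + (b + 1) - 1 = a + b + 1 by omega, show a + 1 + (b + 1) = a + b + 2 by omega]
  have h1 : ((a + b + 1).factorial : ℚ) ≠ 0 := by exact_mod_cast Nat.factorial_ne_zero _
  have h2 : ((b + 1).factorial : ℚ) ≠ 0 := by exact_mod_cast Nat.factorial_ne_zero _
  have h3 : ((a + 1).factorial : ℚ) ≠ 0 := by exact_mod_cast Nat.factorial_ne_zero _
  have h4 : (d.factorial : ℚ) ≠ 0 := by exact_mod_cast Nat.factorial_ne_zero _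
  have h5 : ((a + b + 2).factorial : ℚ) ≠ 0 := by exact_mod_cast Nat.factorial_ne_zero _
  have h6 : (d : ℚ) + 1 ≠ 0 := by positivity
  push_cast
  field_simp
  ring
end

section
/- For every integer n ≥ 2 and all integers i, j, k ≥ 0, the number of minimal factorizations f ∈ 𝔐_n with T_1(f) = i, T_2(f) = j and M_1(f) = k equals the number of Cayley trees t on {1, …, n} with deg_1(t) = i, deg'_2(t) = j and |L_1(t)| = k. -/
/- `M_v`: the number of transpositions of `τ` affecting the trajectory of `v`;
here `((List.ofFn τ).take ℓ).reverse.prod v = (τ_ℓ ∘ ⋯ ∘ τ_1) v` is the position of `v`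
just before the `(ℓ+1)`-st transposition is applied. -/
def Mcount {k m : ℕ} (τ : Fin k → Equiv.Perm (Fin m)) (v : Fin m) : ℕ :=
  (Finset.univ.filter fun ℓ : Fin k =>
    τ ℓ (((List.ofFn τ).take ℓ).reverse.prod v) ≠ ((List.ofFn τ).take ℓ).reverse.prod v).card

open Equiv

namespace MinFact

/-! ### Parent functions and their trees -/

/-- `p ℓ` is the parent of the vertex `ℓ.succ` in a tree rooted at `0`. The absence of cycles is
expressed by the existence of a height function that strictly decreases from child to parent. -/
def IsParent {m : ℕ} (p : Fin m → Fin (m + 1)) : Prop :=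
  ∃ h : Fin (m + 1) → ℕ, ∀ ℓ, h (p ℓ) < h ℓ.succ

/-- The graph whose edges join each non-root vertex `ℓ.succ` to its parent `p ℓ`. -/
def parentGraph {m : ℕ} (p : Fin m → Fin (m + 1)) : SimpleGraph (Fin (m + 1)) :=
  SimpleGraph.fromEdgeSet (Set.range fun ℓ => s(ℓ.succ, p ℓ))

/-- The sequence of transpositions attached to a parent function: the edge joining the vertex
`ℓ.succ` to its parent carries the time label `ℓ`. -/
def parentSwap {m : ℕ} (p : Fin m → Fin (m + 1)) (ℓ : Fin m) : Perm (Fin (m + 1)) :=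
  swap ℓ.succ (p ℓ)

lemma IsParent.ne {m : ℕ} {p : Fin m → Fin (m + 1)} (hp : IsParent p) (ℓ : Fin m) :
    p ℓ ≠ ℓ.succ := by
  obtain ⟨h, hh⟩ := hp
  intro e
  have := hh ℓ
  rw [e] at this
  omega

lemma IsParent.adj_iff {m : ℕ} {p : Fin m → Fin (m + 1)} (hp : IsParent p) (a b : Fin (m + 1)) :
    (parentGraph p).Adj a b ↔ ∃ ℓ, (a = ℓ.succ ∧ b = p ℓ) ∨ (b = ℓ.succ ∧ a = p ℓ) := by
  simp only [parentGraph, SimpleGraph.fromEdgeSet_adj, Set.mem_range, Sym2.eq_iff]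
  constructor
  · rintro ⟨⟨ℓ, h⟩, -⟩
    exact ⟨ℓ, by tauto⟩
  · rintro ⟨ℓ, h⟩
    refine ⟨⟨ℓ, by tauto⟩, ?_⟩
    have := hp.ne ℓ
    rcases h with ⟨rfl, rfl⟩ | ⟨rfl, rfl⟩
    · exact this.symm
    · exact this

/-- Distinct indices give distinct edges: a common edge would make two vertices parents of each
other, contradicting the height function. -/
lemma IsParent.edge_injective {m : ℕ} {p : Fin m → Fin (m + 1)} (hp : IsParent p) :
    Function.Injective fun ℓ => s(ℓ.succ, p ℓ) := by
  obtain ⟨h, hh⟩ := hp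
  intro a b e
  rcases Sym2.eq_iff.1 e with ⟨e, -⟩ | ⟨e1, e2⟩
  · exact Fin.succ_injective _ e
  · have h1 := hh a
    have h2 := hh b
    rw [e1, e2] at h1
    omega

lemma IsParent.edgeSet_eq {m : ℕ} {p : Fin m → Fin (m + 1)} (hp : IsParent p) :
    (parentGraph p).edgeSet = Set.range fun ℓ => s(ℓ.succ, p ℓ) := by
  ext e
  induction e using Sym2.ind with
  | _ a b =>
    rw [SimpleGraph.mem_edgeSet, hp.adj_iff]
    simp only [Set.mem_range, Sym2.eq_iff]
    exact exists_congr fun ℓ => by tauto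

lemma IsParent.ncard_edgeSet {m : ℕ} {p : Fin m → Fin (m + 1)} (hp : IsParent p) :
    (parentGraph p).edgeSet.ncard = m := by
  rw [hp.edgeSet_eq, ← Set.image_univ, Set.ncard_image_of_injective _ hp.edge_injective]
  simp

lemma IsParent.isTree {m : ℕ} {p : Fin m → Fin (m + 1)} (hp : IsParent p) :
    (parentGraph p).IsTree := by
  rw [SimpleGraph.isTree_iff_connected_and_card]
  constructor
  · have key : ∀ v, (parentGraph p).Reachable v 0 := by
      obtain ⟨h, hh⟩ := id hp
      intro v
      induction hv : h v using Nat.strong_induction_on generalizing v with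
      | _ k ih =>
        induction v using Fin.cases with
        | zero => rfl
        | succ ℓ =>
          have hadj : (parentGraph p).Adj ℓ.succ (p ℓ) := (hp.adj_iff _ _).2 ⟨ℓ, .inl ⟨rfl, rfl⟩⟩
          exact hadj.reachable.trans (ih _ (hv ▸ hh ℓ) _ rfl)
    exact ⟨fun a b => (key a).trans (key b).symm⟩
  · rw [Nat.card_coe_set_eq, hp.ncard_edgeSet]
    simp

lemma exists_adj_dist_lt {V : Type*} {G : SimpleGraph V} (hG : G.Connected) {r v : V}
    (hv : v ≠ r) : ∃ u, G.Adj v u ∧ G.dist u r < G.dist v r := by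
  obtain ⟨w, hw⟩ := hG.exists_walk_length_eq_dist v r
  cases w with
  | nil => exact absurd rfl hv
  | cons h q =>
    refine ⟨_, h, ?_⟩
    have := SimpleGraph.dist_le q
    rw [← hw, SimpleGraph.Walk.length_cons]
    omega

lemma exists_isParent_of_isTree {m : ℕ} {t : SimpleGraph (Fin (m + 1))} (ht : t.IsTree) :
    ∃ p, IsParent p ∧ parentGraph p = t := by
  choose p hp using fun ℓ : Fin m => exists_adj_dist_lt ht.connected (Fin.succ_ne_zero ℓ)
  have hpar : IsParent p := ⟨fun v => t.dist v 0, fun ℓ => (hp ℓ).2⟩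
  refine ⟨p, hpar, ?_⟩
  rw [← SimpleGraph.edgeSet_inj]
  apply Set.eq_of_subset_of_ncard_le _ _ (Set.toFinite _)
  · rw [hpar.edgeSet_eq]
    rintro _ ⟨ℓ, rfl⟩
    exact (hp ℓ).1
  · have := (SimpleGraph.isTree_iff_connected_and_card.1 ht).2
    rw [Nat.card_coe_set_eq] at this
    rw [hpar.ncard_edgeSet]
    simp at this
    omega

lemma parentGraph_injective {m : ℕ} {p q : Fin m → Fin (m + 1)} (hp : IsParent p)
    (hq : IsParent q) (e : parentGraph p = parentGraph q) : p = q := by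
  obtain ⟨h, hh⟩ := id hp
  funext ℓ
  induction hv : h ℓ.succ using Nat.strong_induction_on generalizing ℓ with
  | _ k ih =>
    have h1 : (parentGraph q).Adj ℓ.succ (p ℓ) := by
      rw [← e, hp.adj_iff]
      exact ⟨ℓ, .inl ⟨rfl, rfl⟩⟩
    obtain ⟨j, ⟨h2, h3⟩ | ⟨h2, h3⟩⟩ := (hq.adj_iff _ _).1 h1
    · rw [h3, Fin.succ_injective _ h2]
    · have h4 := hh ℓ
      have h5 := hh j
      rw [h2] at h4
      rw [ih _ (hv ▸ h4) j rfl, ← h3] at h5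
      omega

/-- Parent functions correspond to trees, each tree being rooted at `0`. -/
noncomputable def treeEquiv (m : ℕ) : {p : Fin m → Fin (m + 1) // IsParent p} ≃
    {t : SimpleGraph (Fin (m + 1)) // t.IsTree} :=
  Equiv.ofBijective (fun p => ⟨parentGraph p.1, p.2.isTree⟩) <| by
    constructor
    · intro p q e
      exact Subtype.ext (parentGraph_injective p.2 q.2 (congrArg Subtype.val e))
    · rintro ⟨t, ht⟩
      obtain ⟨p, hp, rfl⟩ := exists_isParent_of_isTree ht
      exact ⟨⟨p, hp⟩, rfl⟩

/-! ### Partial products -/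

/-- The composition of the first `ℓ` transpositions, the earliest being applied first. -/
def partialProd {k m : ℕ} (τ : Fin k → Perm (Fin m)) (ℓ : ℕ) : Perm (Fin m) :=
  ((List.ofFn τ).take ℓ).reverse.prod

lemma partialProd_zero {k m : ℕ} (τ : Fin k → Perm (Fin m)) : partialProd τ 0 = 1 := by
  simp [partialProd]

lemma partialProd_succ {k m : ℕ} (τ : Fin k → Perm (Fin m)) (ℓ : Fin k) :
    partialProd τ (ℓ + 1) = τ ℓ * partialProd τ ℓ := by
  simp [partialProd, List.take_add_one]

lemma partialProd_self {k m : ℕ} (τ : Fin k → Perm (Fin m)) :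
    partialProd τ k = (List.ofFn τ).reverse.prod := by
  rw [partialProd, List.take_of_length_le (by simp)]

lemma partialProd_conj {k m : ℕ} (τ : Fin k → Perm (Fin m)) (π : Perm (Fin m)) (ℓ : ℕ)
    (hℓ : ℓ ≤ k) :
    partialProd (fun j => π * τ j * π⁻¹) ℓ = π * partialProd τ ℓ * π⁻¹ := by
  induction ℓ with
  | zero => simp [partialProd_zero]
  | succ ℓ ih =>
    have h1 := partialProd_succ τ ⟨ℓ, hℓ⟩
    have h2 := partialProd_succ (fun j => π * τ j * π⁻¹) ⟨ℓ, hℓ⟩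
    simp only at h1 h2
    rw [h1, h2, ih (by omega)]
    group

/-- The orbits of a partial product stay inside the components formed by the
edges used: a function constant along each such edge is invariant under the partial product. -/
lemma partialProd_invariant {k m : ℕ} {β : Type*} (τ : Fin k → Perm (Fin m)) (φ : Fin m → β)
    (ℓ : ℕ) (hℓ : ℓ ≤ k) (hφ : ∀ j : Fin k, (j : ℕ) < ℓ → ∀ v, φ (τ j v) = φ v) (v : Fin m) :
    φ (partialProd τ ℓ v) = φ v := by
  induction ℓ with
  | zero => simp [partialProd_zero]
  | succ ℓ ih =>
    have h1 := partialProd_succ τ ⟨ℓ, hℓ⟩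
    simp only at h1
    rw [h1, Perm.mul_apply, hφ _ (by simp), ih (by omega) fun j hj => hφ j (by omega)]

lemma Tcount_conj {k m : ℕ} (τ : Fin k → Perm (Fin m)) (π : Perm (Fin m)) (v : Fin m) :
    Tcount (fun j => π * τ j * π⁻¹) (π v) = Tcount τ v := by
  simp [Tcount]

lemma Mcount_eq {k m : ℕ} (τ : Fin k → Perm (Fin m)) (v : Fin m) :
    Mcount τ v = (Finset.univ.filter fun ℓ : Fin k =>
      τ ℓ (partialProd τ ℓ v) ≠ partialProd τ ℓ v).card := rfl

lemma Mcount_conj {k m : ℕ} (τ : Fin k → Perm (Fin m)) (π : Perm (Fin m)) (v : Fin m) :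
    Mcount (fun j => π * τ j * π⁻¹) (π v) = Mcount τ v := by
  rw [Mcount_eq, Mcount_eq]
  congr 1
  ext ℓ
  rw [Finset.mem_filter, Finset.mem_filter, partialProd_conj τ π ℓ ℓ.2.le]
  simp

/-! ### The product of the edges of a tree is a full cycle -/

lemma sameCycle_invariant {α β : Type*} {f : Perm α} {φ : α → β} (hφ : ∀ v, φ (f v) = φ v)
    {a b : α} (h : f.SameCycle a b) : φ a = φ b := by
  have hinv : ∀ v, φ (f⁻¹ v) = φ v := fun v => by simpa using (hφ (f⁻¹ v)).symm
  obtain ⟨i, rfl⟩ := h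
  induction i using Int.induction_on with
  | zero => simp
  | succ i ih => rw [add_comm, zpow_add, Perm.mul_apply, zpow_one, hφ, ih]
  | pred i ih => rw [sub_eq_neg_add, zpow_add, Perm.mul_apply, zpow_neg_one, hinv, ih]

/-- If `x` and `y` lie in different cycles of `f`, then every point of the cycle of `x` is sent to
`y` by some power of `swap x y * f`: follow `f` until the first visit to `x`. -/
lemma sameCycle_swap_mul_aux {α : Type*} [Finite α] [DecidableEq α] {f : Perm α} {x y a : α}
    (hxy : ¬ f.SameCycle x y) (ha : f.SameCycle a x) : (swap x y * f).SameCycle a y := by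
  classical
  have hex : ∃ i, 0 < i ∧ (f ^ i) a = x := by
    obtain ⟨i, hi, -, h⟩ := ha.exists_pow_eq''
    exact ⟨i, hi, h⟩
  obtain ⟨hpos, hN⟩ := Nat.find_spec hex
  have hmin : ∀ i < Nat.find hex, ((swap x y * f) ^ i) a = (f ^ i) a := by
    intro i hi
    induction i with
    | zero => rfl
    | succ i ih =>
      have h1 : (f ^ (i + 1)) a ≠ x := fun h => Nat.find_min hex hi ⟨by omega, h⟩
      have h2 : (f ^ (i + 1)) a ≠ y := by
        intro h
        exact hxy (ha.symm.trans ⟨(i + 1 : ℕ), by rw [zpow_natCast]; exact h⟩)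
      rw [pow_succ', Perm.mul_apply, ih (by omega), Perm.mul_apply, ← Perm.mul_apply f,
        ← pow_succ', swap_apply_of_ne_of_ne h1 h2]
  refine ⟨(Nat.find hex : ℕ), ?_⟩
  obtain ⟨N, hNe⟩ : ∃ N, Nat.find hex = N + 1 := ⟨_, (Nat.succ_pred_eq_of_pos hpos).symm⟩
  rw [hNe] at hN hmin
  rw [hNe, zpow_natCast, pow_succ', Perm.mul_apply, hmin N (by omega), Perm.mul_apply,
    ← Perm.mul_apply f, ← pow_succ', hN, swap_apply_left]

/-- Multiplying by a transposition of two points in different cycles merges these cycles and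
breaks none. -/
lemma sameCycle_swap_mul {α : Type*} [Finite α] [DecidableEq α] {f : Perm α} {x y : α}
    (hxy : ¬ f.SameCycle x y) :
    (swap x y * f).SameCycle x y ∧
      ∀ a b, f.SameCycle a b → (swap x y * f).SameCycle a b := by
  have hx : ∀ a, f.SameCycle a x → (swap x y * f).SameCycle a y :=
    fun a ha => sameCycle_swap_mul_aux hxy ha
  have hy : ∀ a, f.SameCycle a y → (swap x y * f).SameCycle a x := fun a ha => by
    rw [swap_comm]
    exact sameCycle_swap_mul_aux (fun h => hxy h.symm) ha
  refine ⟨hx x (.refl _ _), fun a b hab => ?_⟩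
  by_cases h1 : f.SameCycle a x
  · exact (hx a h1).trans (hx b (hab.symm.trans h1)).symm
  by_cases h2 : f.SameCycle a y
  · exact (hy a h2).trans (hy b (hab.symm.trans h2)).symm
  -- The cycle of `a` avoids `x` and `y`, so both permutations agree along it.
  obtain ⟨i, rfl⟩ := hab.exists_nat_pow_eq
  refine ⟨(i : ℕ), ?_⟩
  rw [zpow_natCast]
  clear hab
  induction i with
  | zero => rfl
  | succ i ih =>
    have h3 : f.SameCycle a ((f ^ (i + 1)) a) := ⟨(i + 1 : ℕ), by rw [zpow_natCast]⟩
    rw [pow_succ', Perm.mul_apply, ih, Perm.mul_apply, ← Perm.mul_apply f, ← pow_succ',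
      swap_apply_of_ne_of_ne]
    · rintro h
      exact h1 (h ▸ h3)
    · rintro h
      exact h2 (h ▸ h3)

/-- Before the edge of index `ℓ` is used, its endpoints are in different orbits: being a descendant
of `ℓ.succ` is invariant under all the other transpositions. -/
lemma IsParent.not_sameCycle {m : ℕ} {p : Fin m → Fin (m + 1)} (hp : IsParent p) (ℓ : Fin m) :
    ¬ (partialProd (parentSwap p) ℓ).SameCycle ℓ.succ (p ℓ) := by
  obtain ⟨h, hh⟩ := hp
  let par : Fin (m + 1) → Fin (m + 1) := Fin.cases 0 p
  have hpar : ∀ v, h (par v) ≤ h v := by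
    intro v
    induction v using Fin.cases with
    | zero => exact le_rfl
    | succ j => exact (hh j).le
  have hiter : ∀ k v, h (par^[k] v) ≤ h v := by
    intro k
    induction k with
    | zero => exact fun v => le_rfl
    | succ k ih =>
      intro v
      rw [Function.iterate_succ_apply]
      exact (ih _).trans (hpar v)
  let D : Fin (m + 1) → Prop := fun v => ∃ k, par^[k] v = ℓ.succ
  have hD : ∀ j : Fin m, j ≠ ℓ → D j.succ = D (p j) := by
    intro j hj
    refine propext ⟨?_, ?_⟩
    · rintro ⟨k, hk⟩
      cases k with
      | zero => exact absurd (Fin.succ_injective _ hk) hj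
      | succ k => exact ⟨k, hk⟩
    · rintro ⟨k, hk⟩
      exact ⟨k + 1, hk⟩
  intro hs
  have hinv := sameCycle_invariant (φ := D) (fun v => partialProd_invariant _ D ℓ ℓ.2.le
    (fun j hj v => by
      have := hD j (fun e => by rw [e] at hj; omega)
      unfold parentSwap
      rw [swap_apply_def]
      split_ifs with h1 h2
      · rw [h1, this]
      · rw [h2, this]
      · rfl) v) hs
  have h1 : D ℓ.succ := ⟨0, rfl⟩
  rw [hinv] at h1
  obtain ⟨k, hk⟩ := h1
  have h2 := hiter k (p ℓ)
  have h3 := hh ℓ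
  rw [hk] at h2
  omega

lemma IsParent.sameCycle {m : ℕ} {p : Fin m → Fin (m + 1)} (hp : IsParent p)
    (a b : Fin (m + 1)) : (partialProd (parentSwap p) m).SameCycle a b := by
  have key : ∀ ℓ ≤ m, ∀ j : Fin m, (j : ℕ) < ℓ →
      (partialProd (parentSwap p) ℓ).SameCycle j.succ (p j) := by
    intro ℓ hℓ
    induction ℓ with
    | zero => intro j hj; omega
    | succ ℓ ih =>
      intro j hj
      have h1 := partialProd_succ (parentSwap p) ⟨ℓ, hℓ⟩
      have h2 := sameCycle_swap_mul (hp.not_sameCycle ⟨ℓ, hℓ⟩)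
      simp only at h1 h2
      rw [h1, parentSwap]
      rcases Nat.lt_succ_iff_lt_or_eq.1 hj with hj | hj
      · exact h2.2 _ _ (ih (by omega) j hj)
      · have : j = ⟨ℓ, hℓ⟩ := Fin.ext hj
        rw [this]
        exact h2.1
  obtain ⟨h, hh⟩ := hp
  have h0 : ∀ v, (partialProd (parentSwap p) m).SameCycle v 0 := by
    intro v
    induction hv : h v using Nat.strong_induction_on generalizing v with
    | _ k ih =>
      induction v using Fin.cases with
      | zero => exact .refl _ _
      | succ ℓ => exact (key m le_rfl ℓ ℓ.2).trans (ih _ (hv ▸ hh ℓ) _ rfl)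
  exact (h0 a).trans (h0 b).symm

/-! ### Relabelling the vertices -/

lemma finRotate_sameCycle {m : ℕ} (hm : 1 ≤ m) (a b : Fin (m + 1)) :
    (finRotate (m + 1)).SameCycle a b := by
  have hs := support_finRotate_of_le (n := m + 1) (by omega)
  have hne : ∀ v, finRotate (m + 1) v ≠ v := fun v => by
    rw [← Perm.mem_support, hs]
    exact Finset.mem_univ v
  exact (isCycle_finRotate_of_le (by omega)).sameCycle (hne a) (hne b)

/-- A permutation with a single orbit is conjugate to the standard cycle by a permutation that
fixes `0`. -/
lemma exists_conj_finRotate {m : ℕ} (hm : 1 ≤ m) {c : Perm (Fin (m + 1))}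
    (hc : ∀ a b, c.SameCycle a b) :
    ∃ π : Perm (Fin (m + 1)), π 0 = 0 ∧ π * c * π⁻¹ = finRotate (m + 1) := by
  have : Nontrivial (Fin (m + 1)) := Fin.nontrivial_iff_two_le.2 (by omega)
  have hne : ∀ v, c v ≠ v := by
    intro v hv
    obtain ⟨w, hw⟩ := exists_ne v
    exact hw ((hc v w).eq_of_left hv).symm
  have hcyc : c.IsCycle := ⟨0, hne 0, fun y _ => hc 0 y⟩
  have hsupp : c.support = Finset.univ := by
    ext v
    simp [hne v]
  obtain ⟨π, hπ⟩ := isConj_iff.1 (hcyc.isConj (isCycle_finRotate_of_le (n := m + 1) (by omega))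
    (by rw [hsupp, support_finRotate_of_le (by omega)]))
  -- Correct the conjugating permutation by a rotation to make it fix `0`.
  obtain ⟨i, hi⟩ := finRotate_sameCycle hm (π 0) 0
  refine ⟨finRotate (m + 1) ^ i * π, by simpa using hi, ?_⟩
  rw [mul_inv_rev, show finRotate (m + 1) ^ i * π * c * (π⁻¹ * (finRotate (m + 1) ^ i)⁻¹) =
    finRotate (m + 1) ^ i * (π * c * π⁻¹) * (finRotate (m + 1) ^ i)⁻¹ by group, hπ]
  group

lemma conj_finRotate_unique {m : ℕ} {c : Perm (Fin (m + 1))} (hc : ∀ a b, c.SameCycle a b)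
    {π ρ : Perm (Fin (m + 1))} (hπ0 : π 0 = 0) (hρ0 : ρ 0 = 0)
    (h : π * c * π⁻¹ = ρ * c * ρ⁻¹) : π = ρ := by
  have hcomm : ∀ v, (ρ⁻¹ * π) (c v) = c ((ρ⁻¹ * π) v) := by
    intro v
    have h1 : (ρ⁻¹ * π) * c = c * (ρ⁻¹ * π) := by
      calc (ρ⁻¹ * π) * c = ρ⁻¹ * (π * c * π⁻¹) * π := by group
        _ = c * (ρ⁻¹ * π) := by rw [h]; group
    exact congrArg (fun g : Perm (Fin (m + 1)) => g v) h1
  have hid : ∀ v, (ρ⁻¹ * π) v = v := by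
    intro v
    obtain ⟨i, rfl⟩ := (hc 0 v).exists_nat_pow_eq
    induction i with
    | zero => rw [pow_zero, Perm.one_apply, Perm.mul_apply, hπ0, Perm.inv_eq_iff_eq, hρ0]
    | succ i ih => rw [pow_succ', Perm.mul_apply c, hcomm, ih]
  ext1 v
  have := hid v
  rw [Perm.mul_apply, Perm.inv_eq_iff_eq] at this
  exact this

lemma IsParent.exists_relabel {m : ℕ} (hm : 1 ≤ m) {p : Fin m → Fin (m + 1)} (hp : IsParent p) :
    ∃ π : Perm (Fin (m + 1)), π 0 = 0 ∧ IsMinFact fun j => π * parentSwap p j * π⁻¹ := by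
  obtain ⟨π, h0, hπ⟩ := exists_conj_finRotate hm hp.sameCycle
  refine ⟨π, h0, fun ℓ => ⟨π ℓ.succ, π (p ℓ), fun e => hp.ne ℓ (π.injective e).symm, ?_⟩, ?_⟩
  · simp only [parentSwap]
    rw [mul_swap_eq_swap_mul, mul_inv_cancel_right]
  · rw [← partialProd_self, partialProd_conj _ _ _ le_rfl, hπ]

/-- The transpositions of a minimal factorization connect all the points, and therefore each
`v ≠ 0` has a neighbour closer to `0`. Sending `v` to the time of the corresponding transposition
is injective, hence bijective, and relabelling every vertex by this time produces the sequence
attached to a parent function. -/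
lemma exists_isParent_of_isMinFact {m : ℕ} (hm : 1 ≤ m) {τ : Fin m → Perm (Fin (m + 1))}
    (hτ : IsMinFact τ) : ∃ (p : Fin m → Fin (m + 1)) (π : Perm (Fin (m + 1))),
      IsParent p ∧ π 0 = 0 ∧ τ = fun j => π * parentSwap p j * π⁻¹ := by
  let G : SimpleGraph (Fin (m + 1)) := SimpleGraph.fromRel fun a b => ∃ ℓ, τ ℓ = swap a b
  have hadj : ∀ a b, G.Adj a b ↔ a ≠ b ∧ ∃ ℓ, τ ℓ = swap a b := by
    intro a b
    simp only [G, SimpleGraph.fromRel_adj, swap_comm b a, or_self]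
  have hstep : ∀ ℓ v, G.Reachable (τ ℓ v) v := by
    intro ℓ v
    obtain ⟨x, y, hxy, e⟩ := hτ.1 ℓ
    have hr : G.Reachable x y := ((hadj x y).2 ⟨hxy, ℓ, e⟩).reachable
    rw [e, swap_apply_def]
    split_ifs with h1 h2
    · rw [h1]
      exact hr.symm
    · rw [h2]
      exact hr
    · rfl
  have hconn : G.Connected := by
    refine ⟨fun a b => ?_⟩
    have hinv : ∀ v, G.connectedComponentMk (finRotate (m + 1) v) = G.connectedComponentMk v := by
      intro v
      rw [← hτ.2, ← partialProd_self]
      exact partialProd_invariant τ G.connectedComponentMk m le_rfl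
        (fun j _ v => SimpleGraph.ConnectedComponent.eq.2 (hstep j v)) v
    exact SimpleGraph.ConnectedComponent.eq.1
      (sameCycle_invariant hinv (finRotate_sameCycle hm a b))
  choose u hu using fun ℓ : Fin m => exists_adj_dist_lt hconn (Fin.succ_ne_zero ℓ)
  choose e he using fun ℓ => ((hadj _ _).1 (hu ℓ).1).2
  have hinj : Function.Injective e := by
    intro a b hab
    have h1 : swap a.succ (u a) = swap b.succ (u b) := by rw [← he, ← he, hab]
    by_contra hne
    have h2 : swap b.succ (u b) a.succ ≠ a.succ := by
      rw [← h1, swap_apply_left]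
      exact (hu a).1.ne'
    have h3 : a.succ = u b := by
      rcases (swap_apply_ne_self_iff.1 h2).2 with h | h
      · exact absurd (Fin.succ_injective _ h) hne
      · exact h
    have h4 : u a = b.succ := by
      have := congrArg (fun g : Perm (Fin (m + 1)) => g a.succ) h1
      simp only [swap_apply_left] at this
      rw [this, h3, swap_apply_right]
    have h5 := (hu a).2
    have h6 := (hu b).2
    rw [h4] at h5
    rw [← h3] at h6
    omega
  let ε : Perm (Fin m) := Equiv.ofBijective e (Finite.injective_iff_bijective.1 hinj)
  let κ : Perm (Fin (m + 1)) := Perm.decomposeFin.symm (0, ε)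
  have hκ0 : κ 0 = 0 := by simp [κ]
  have hκs : ∀ ℓ, κ ℓ.succ = (e ℓ).succ := fun ℓ => by simp [κ, ε]
  have hε : ∀ j, e (ε.symm j) = j := fun j => ε.apply_symm_apply j
  refine ⟨fun j => κ (u (ε.symm j)), κ⁻¹, ⟨fun v => G.dist (κ⁻¹ v) 0, fun j => ?_⟩, ?_, ?_⟩
  · have h1 : κ⁻¹ j.succ = (ε.symm j).succ := by rw [Perm.inv_eq_iff_eq, hκs, hε]
    have h2 : κ⁻¹ (κ (u (ε.symm j))) = u (ε.symm j) := κ.symm_apply_apply _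
    simp only [h1, h2]
    exact (hu (ε.symm j)).2
  · rw [Perm.inv_eq_iff_eq, hκ0]
  · funext j
    have h1 : parentSwap (fun j => κ (u (ε.symm j))) j = κ * τ j * κ⁻¹ := by
      obtain ⟨ℓ, rfl⟩ := ε.surjective j
      have h2 : τ (ε ℓ) = swap ℓ.succ (u ℓ) := he ℓ
      rw [h2, mul_swap_eq_swap_mul, mul_inv_cancel_right, hκs]
      simp only [parentSwap, symm_apply_apply]
      rfl
    rw [h1]
    group

/-- A relabelling fixing the root that respects the edge labels is the identity: it fixes each
vertex once it fixes the parent. -/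
lemma parentSwap_conj_injective {m : ℕ} {p q : Fin m → Fin (m + 1)} (hp : IsParent p)
    (hq : IsParent q) {ρ : Perm (Fin (m + 1))} (h0 : ρ 0 = 0)
    (h : ∀ ℓ, ρ * parentSwap p ℓ * ρ⁻¹ = parentSwap q ℓ) : p = q := by
  have h' : ∀ ℓ, swap (ρ ℓ.succ) (ρ (p ℓ)) = swap ℓ.succ (q ℓ) := by
    intro ℓ
    have := h ℓ
    rwa [parentSwap, mul_swap_eq_swap_mul, mul_inv_cancel_right] at this
  have hid : ∀ v, ρ v = v := by
    obtain ⟨hgt, hh⟩ := id hp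
    intro v
    induction hv : hgt v using Nat.strong_induction_on generalizing v with
    | _ k ih =>
      induction v using Fin.cases with
      | zero => exact h0
      | succ ℓ =>
        have h1 := h' ℓ
        rw [ih _ (hv ▸ hh ℓ) (p ℓ) rfl] at h1
        have h2 : swap (ρ ℓ.succ) (p ℓ) ℓ.succ ≠ ℓ.succ := by
          rw [h1, swap_apply_left]
          exact hq.ne ℓ
        rcases (swap_apply_ne_self_iff.1 h2).2 with h3 | h3
        · exact h3.symm
        · exact absurd h3.symm (hp.ne ℓ)
  funext ℓ
  have h1 := congrArg (fun g : Perm (Fin (m + 1)) => g ℓ.succ) (h' ℓ)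
  simpa [hid] using h1

/-- The permutation fixing `0` that conjugates the product of the edges of the tree to the
standard cycle. -/
noncomputable def relabel {m : ℕ} (hm : 1 ≤ m) {p : Fin m → Fin (m + 1)} (hp : IsParent p) :
    Perm (Fin (m + 1)) :=
  (hp.exists_relabel hm).choose

/-- The minimal factorization obtained by relabelling the vertices of a tree. -/
noncomputable def factorization {m : ℕ} (hm : 1 ≤ m) {p : Fin m → Fin (m + 1)}
    (hp : IsParent p) (j : Fin m) : Perm (Fin (m + 1)) :=
  relabel hm hp * parentSwap p j * (relabel hm hp)⁻¹

lemma relabel_zero {m : ℕ} (hm : 1 ≤ m) {p : Fin m → Fin (m + 1)} (hp : IsParent p) :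
    relabel hm hp 0 = 0 := (hp.exists_relabel hm).choose_spec.1

lemma isMinFact_factorization {m : ℕ} (hm : 1 ≤ m) {p : Fin m → Fin (m + 1)} (hp : IsParent p) :
    IsMinFact (factorization hm hp) := (hp.exists_relabel hm).choose_spec.2

/-- Minimal factorizations correspond to parent functions. -/
noncomputable def factorEquiv {m : ℕ} (hm : 1 ≤ m) :
    {p : Fin m → Fin (m + 1) // IsParent p} ≃
      {τ : Fin m → Perm (Fin (m + 1)) // IsMinFact τ} :=
  Equiv.ofBijective (fun p => ⟨factorization hm p.2, isMinFact_factorization hm p.2⟩) <| by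
    constructor
    · rintro ⟨p, hp⟩ ⟨q, hq⟩ e
      have e' := congrArg Subtype.val e
      simp only at e'
      refine Subtype.ext (parentSwap_conj_injective hp hq
        (ρ := (relabel hm hq)⁻¹ * relabel hm hp) ?_ fun ℓ => ?_)
      · rw [Perm.mul_apply, relabel_zero, Perm.inv_eq_iff_eq, relabel_zero]
      · have h1 := congrFun e' ℓ
        unfold factorization at h1
        calc _ = (relabel hm hq)⁻¹ * (relabel hm hp * parentSwap p ℓ * (relabel hm hp)⁻¹) *
              relabel hm hq := by group
          _ = _ := by rw [h1]; group
    · rintro ⟨τ, hτ⟩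
      obtain ⟨p, π, hp, h0, rfl⟩ := exists_isParent_of_isMinFact hm hτ
      refine ⟨⟨p, hp⟩, Subtype.ext ?_⟩
      have h1 : relabel hm hp = π := by
        refine conj_finRotate_unique hp.sameCycle (relabel_zero hm hp) h0 ?_
        rw [← partialProd_conj _ _ _ le_rfl, ← partialProd_conj _ _ _ le_rfl, partialProd_self,
          partialProd_self, hτ.2]
        exact (isMinFact_factorization hm hp).2
      funext j
      simp only [factorization, h1]

/-! ### Degrees and the greedy path -/

lemma IsParent.Tcount_eq {m : ℕ} {p : Fin m → Fin (m + 1)} (hp : IsParent p)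
    (v : Fin (m + 1)) :
    Tcount (parentSwap p) v = ((parentGraph p).neighborSet v).ncard := by
  rw [Tcount, ← Set.ncard_coe_finset]
  refine Set.ncard_congr (fun ℓ _ => parentSwap p ℓ v) ?_ ?_ ?_
  · intro ℓ hℓ
    have hℓ : swap ℓ.succ (p ℓ) v ≠ v := (Finset.mem_filter.1 hℓ).2
    rw [SimpleGraph.mem_neighborSet, hp.adj_iff]
    refine ⟨ℓ, ?_⟩
    unfold parentSwap
    rcases (swap_apply_ne_self_iff.1 hℓ).2 with rfl | rfl
    · exact .inl ⟨rfl, swap_apply_left _ _⟩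
    · exact .inr ⟨swap_apply_right _ _, rfl⟩
  · intro a b ha hb hab
    have key : ∀ ℓ : Fin m, ℓ ∈ ((Finset.univ.filter fun ℓ => parentSwap p ℓ v ≠ v : Finset _) :
        Set (Fin m)) → s(ℓ.succ, p ℓ) = s(v, parentSwap p ℓ v) := by
      intro ℓ hℓ
      have hℓ : swap ℓ.succ (p ℓ) v ≠ v := (Finset.mem_filter.1 hℓ).2
      unfold parentSwap
      rcases (swap_apply_ne_self_iff.1 hℓ).2 with rfl | rfl
      · rw [swap_apply_left]
      · rw [swap_apply_right, Sym2.eq_swap]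
    apply hp.edge_injective
    simp only at hab ⊢
    rw [key a ha, key b hb, hab]
  · intro w hw
    rw [SimpleGraph.mem_neighborSet, hp.adj_iff] at hw
    obtain ⟨ℓ, ⟨rfl, rfl⟩ | ⟨rfl, rfl⟩⟩ := hw
    · exact ⟨ℓ, Finset.mem_filter.2 ⟨Finset.mem_univ _, by simpa [parentSwap] using hp.ne ℓ⟩,
        swap_apply_left _ _⟩
    · exact ⟨ℓ, Finset.mem_filter.2
        ⟨Finset.mem_univ _, by simpa [parentSwap] using (hp.ne ℓ).symm⟩, swap_apply_right _ _⟩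

lemma greedyNext_eq {m : ℕ} {t : SimpleGraph (Fin m)} {v w : Fin m} (h1 : t.Adj v w)
    (h2 : v < w) (h3 : ∀ u, t.Adj v u → v < u → w ≤ u) : greedyNext t v = w := by
  classical
  have hmem : w ∈ Finset.univ.filter fun w => t.Adj v w ∧ v < w := by simp [h1, h2]
  unfold greedyNext
  rw [dif_pos ⟨w, by simpa using hmem⟩]
  apply le_antisymm
  · exact Finset.min'_le _ _ (by simpa using hmem)
  · refine Finset.le_min' _ _ _ fun u hu => ?_
    simp only [Finset.mem_filter, Finset.mem_univ, true_and] at hu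
    exact h3 u hu.1 hu.2

lemma greedyNext_eq_self {m : ℕ} {t : SimpleGraph (Fin m)} {v : Fin m}
    (h : ∀ u, t.Adj v u → ¬ v < u) : greedyNext t v = v := by
  unfold greedyNext
  rw [dif_neg]
  rintro ⟨u, hu⟩
  simp only [Finset.mem_filter, Finset.mem_univ, true_and] at hu
  exact h u hu.1 hu.2

/-- After the first `ℓ` transpositions, the root has travelled along the greedy increasing path:
it sits at the `c`-th vertex `w` of this path, where `c` is the number of effective moves. Moreover
`w ≤ ℓ`, the parent of `w` is smaller than `w`, and every neighbour of `w` larger than `w` is also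
larger than `ℓ`, so that its edge has not been used yet. -/
lemma IsParent.trajectory {m : ℕ} {p : Fin m → Fin (m + 1)} (hp : IsParent p) (ℓ : ℕ)
    (hℓ : ℓ ≤ m) : ∃ c w,
      c = (Finset.univ.filter fun j : Fin m => (j : ℕ) < ℓ ∧
        parentSwap p j (partialProd (parentSwap p) j 0) ≠ partialProd (parentSwap p) j 0).card ∧
      c ≤ ℓ ∧
      partialProd (parentSwap p) ℓ 0 = w ∧
      (greedyNext (parentGraph p))^[c] 0 = w ∧
      (∀ k < c, (greedyNext (parentGraph p))^[k + 1] 0 ≠ (greedyNext (parentGraph p))^[k] 0) ∧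
      (w : ℕ) ≤ ℓ ∧
      (∀ j, w = Fin.succ j → p j < w) ∧
      ∀ u, (parentGraph p).Adj w u → w < u → ℓ < (u : ℕ) := by
  induction ℓ with
  | zero =>
    refine ⟨0, 0, by simp, le_rfl, by simp [partialProd_zero], rfl, by simp, by simp, ?_, ?_⟩
    · exact fun j hj => absurd hj.symm (Fin.succ_ne_zero j)
    · exact fun u _ hu => hu
  | succ ℓ ih =>
    obtain ⟨c, w, hc, hcl, hw, hg, hmov, hwl, hpar, hnbr⟩ := ih (by omega)
    let L : Fin m := ⟨ℓ, hℓ⟩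
    have hprod : partialProd (parentSwap p) (ℓ + 1) 0 = swap L.succ (p L) w := by
      have h1 := partialProd_succ (parentSwap p) L
      simp only [L] at h1
      rw [h1, Perm.mul_apply, hw]
      rfl
    have hwL : w ≠ L.succ := fun e => by
      have := congrArg Fin.val e
      simp only [L, Fin.val_succ] at this
      omega
    have hlt : w < L.succ := by
      rw [Fin.lt_def]
      simp only [L, Fin.val_succ]
      omega
    by_cases hmove : p L = w
    · refine ⟨c + 1, L.succ, ?_, by omega, ?_, ?_, ?_, by simp [L], ?_, ?_⟩
      · have hins : (Finset.univ.filter fun j : Fin m => (j : ℕ) < ℓ + 1 ∧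
            parentSwap p j (partialProd (parentSwap p) j 0) ≠ partialProd (parentSwap p) j 0) =
            insert L (Finset.univ.filter fun j : Fin m => (j : ℕ) < ℓ ∧
            parentSwap p j (partialProd (parentSwap p) j 0) ≠
              partialProd (parentSwap p) j 0) := by
          ext j
          simp only [Finset.mem_filter, Finset.mem_univ, true_and, Finset.mem_insert]
          constructor
          · rintro ⟨h1, h2⟩
            rcases Nat.lt_succ_iff_lt_or_eq.1 h1 with h | h
            · exact .inr ⟨h, h2⟩
            · exact .inl (Fin.ext h)
          · rintro (rfl | ⟨h1, h2⟩)
            · refine ⟨by simp [L], ?_⟩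
              change swap L.succ (p L) (partialProd (parentSwap p) ℓ 0) ≠
                partialProd (parentSwap p) ℓ 0
              rw [hw, hmove, swap_apply_right]
              exact hwL.symm
            · exact ⟨by omega, h2⟩
        rw [hins, Finset.card_insert_of_notMem (by simp [L]), ← hc]
      · rw [hprod, hmove, swap_apply_right]
      · rw [Function.iterate_succ_apply', hg]
        refine greedyNext_eq ((hp.adj_iff _ _).2 ⟨L, .inr ⟨rfl, hmove.symm⟩⟩) hlt ?_
        intro u h1 h2
        have := hnbr u h1 h2
        rw [Fin.le_def]
        simp only [L, Fin.val_succ]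
        omega
      · intro k hk
        rcases Nat.lt_succ_iff_lt_or_eq.1 hk with hk | rfl
        · exact hmov k hk
        · rw [Function.iterate_succ_apply', hg, greedyNext_eq
            ((hp.adj_iff _ _).2 ⟨L, .inr ⟨rfl, hmove.symm⟩⟩) hlt]
          · exact hwL.symm
          · intro u h1 h2
            have := hnbr u h1 h2
            rw [Fin.le_def]
            simp only [L, Fin.val_succ]
            omega
      · intro j hj
        rw [← Fin.succ_injective _ hj, hmove]
        exact hlt
      · intro u _ hu
        rw [Fin.lt_def] at hu
        simpa [L] using hu
    · refine ⟨c, w, ?_, by omega, ?_, hg, hmov, by omega, hpar, ?_⟩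
      · rw [hc]
        congr 1
        ext j
        simp only [Finset.mem_filter, Finset.mem_univ, true_and]
        constructor
        · rintro ⟨h1, h2⟩
          exact ⟨by omega, h2⟩
        · rintro ⟨h1, h2⟩
          refine ⟨?_, h2⟩
          rcases Nat.lt_succ_iff_lt_or_eq.1 h1 with h | h
          · exact h
          · obtain rfl : j = L := Fin.ext h
            refine absurd ?_ h2
            change swap L.succ (p L) (partialProd (parentSwap p) ℓ 0) =
              partialProd (parentSwap p) ℓ 0
            rw [hw, swap_apply_of_ne_of_ne hwL (Ne.symm hmove)]
      · rw [hprod, swap_apply_of_ne_of_ne hwL (Ne.symm hmove)]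
      · intro u h1 h2
        have h3 := hnbr u h1 h2
        have h4 : (u : ℕ) ≠ ℓ + 1 := by
          intro e
          obtain rfl : u = L.succ := Fin.ext (by simpa [L] using e)
          obtain ⟨j, ⟨h5, h6⟩ | ⟨h5, h6⟩⟩ := (hp.adj_iff _ _).1 h1
          · have := hpar j h5
            rw [← h6] at this
            exact absurd this h2.asymm
          · rw [← Fin.succ_injective _ h5] at h6
            exact hmove h6.symm
        omega

lemma IsParent.greedy {m : ℕ} {p : Fin m → Fin (m + 1)} (hp : IsParent p) :
    greedyLast (parentGraph p) 0 = partialProd (parentSwap p) m 0 ∧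
      greedyLenFrom (parentGraph p) 0 = Mcount (parentSwap p) 0 := by
  classical
  obtain ⟨c, w, hc, hcl, hw, hg, hmov, -, -, hnbr⟩ := hp.trajectory m le_rfl
  have hfix : greedyNext (parentGraph p) w = w :=
    greedyNext_eq_self fun u h1 h2 => by
      have := hnbr u h1 h2
      omega
  have hstab : ∀ k, c ≤ k → (greedyNext (parentGraph p))^[k] 0 = w := by
    intro k hk
    obtain ⟨d, rfl⟩ := Nat.exists_eq_add_of_le' hk
    rw [Function.iterate_add_apply, hg, Function.iterate_fixed hfix]
  have hM : c = Mcount (parentSwap p) 0 := by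
    rw [hc, Mcount_eq]
    congr 1
    ext j
    simp
  constructor
  · rw [hw, greedyLast, hstab _ (by omega)]
  · rw [← hM, greedyLenFrom]
    have : ((Finset.range (m + 1)).filter fun k => (greedyNext (parentGraph p))^[k + 1] 0 ≠
        (greedyNext (parentGraph p))^[k] 0) = Finset.range c := by
      ext k
      simp only [Finset.mem_filter, Finset.mem_range]
      constructor
      · rintro ⟨-, h⟩
        by_contra hk
        exact h (by rw [hstab k (by omega), hstab (k + 1) (by omega)])
      · intro hk
        exact ⟨by omega, hmov k hk⟩
    convert Finset.card_range c

/-- The two correspondences carry the statistics to each other. -/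
lemma statistics {m : ℕ} (hm : 1 ≤ m) {p : Fin m → Fin (m + 1)} (hp : IsParent p) :
    Tcount (factorization hm hp) 0 = deg1 (parentGraph p) ∧
      Tcount (factorization hm hp) (finRotate (m + 1) 0) = deg2' (parentGraph p) ∧
      Mcount (factorization hm hp) 0 = L1len (parentGraph p) := by
  have h0 := relabel_zero hm hp
  have hrot : finRotate (m + 1) 0 =
      relabel hm hp (partialProd (parentSwap p) m 0) := by
    rw [← (isMinFact_factorization hm hp).2, ← partialProd_self]
    unfold factorization
    rw [partialProd_conj _ _ _ le_rfl, Perm.mul_apply, Perm.mul_apply,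
      Perm.inv_eq_iff_eq.2 h0.symm]
  refine ⟨?_, ?_, ?_⟩
  · have h1 := Tcount_conj (parentSwap p) (relabel hm hp) 0
    rw [h0, hp.Tcount_eq] at h1
    unfold deg1
    rw [dif_pos (Nat.succ_pos m)]
    exact h1
  · have h1 := Tcount_conj (parentSwap p) (relabel hm hp) (partialProd (parentSwap p) m 0)
    rw [← hrot, hp.Tcount_eq, ← hp.greedy.1] at h1
    unfold deg2'
    rw [dif_pos (Nat.succ_pos m)]
    exact h1
  · have h1 := Mcount_conj (parentSwap p) (relabel hm hp) 0
    rw [h0, ← hp.greedy.2] at h1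
    unfold L1len
    rw [dif_pos (Nat.succ_pos m)]
    exact h1

end MinFact

/-- The bijection `𝔐_n ↔ 𝔠_n` transports `(T_1, T_2, M_1)` to `(deg_1, deg'_2, |L_1|)`:
the two counts agree.  Vertex `1` is index `0` and vertex `2` is index `1`. -/
theorem stmt_2 (n : ℕ) (hn : 2 ≤ n) (i j k : ℕ) :
    Nat.card {τ : Fin (n - 1) → Equiv.Perm (Fin n) //
        IsMinFact τ ∧ Tcount τ ⟨0, by omega⟩ = i ∧ Tcount τ ⟨1, by omega⟩ = j ∧
          Mcount τ ⟨0, by omega⟩ = k} =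
    Nat.card {t : SimpleGraph (Fin n) //
        t.IsTree ∧ deg1 t = i ∧ deg2' t = j ∧ L1len t = k} := by
  obtain ⟨m, rfl⟩ : ∃ m, n = m + 1 := ⟨n - 1, by omega⟩
  have hm : 1 ≤ m := by omega
  change Nat.card {τ : Fin m → Equiv.Perm (Fin (m + 1)) //
        IsMinFact τ ∧ Tcount τ 0 = i ∧ Tcount τ ⟨1, by omega⟩ = j ∧ Mcount τ 0 = k} = _
  have hrot : (⟨1, by omega⟩ : Fin (m + 1)) = finRotate (m + 1) 0 := by
    rw [finRotate_apply, zero_add]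
    ext
    rw [Fin.val_one', Nat.mod_eq_of_lt (by omega)]
  rw [hrot]
  refine Nat.card_congr ((Equiv.subtypeSubtypeEquivSubtypeInter _ _).symm.trans
    (Equiv.trans ?_ (Equiv.subtypeSubtypeEquivSubtypeInter _ _)))
  refine ((MinFact.factorEquiv hm).symm.trans (MinFact.treeEquiv m)).subtypeEquiv fun τ => ?_
  obtain ⟨⟨p, hp⟩, rfl⟩ := (MinFact.factorEquiv hm).surjective τ
  obtain ⟨h1, h2, h3⟩ := MinFact.statistics hm hp
  rw [Equiv.trans_apply, Equiv.symm_apply_apply]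
  change (Tcount (MinFact.factorization hm hp) 0 = i ∧
    Tcount (MinFact.factorization hm hp) (finRotate (m + 1) 0) = j ∧
    Mcount (MinFact.factorization hm hp) 0 = k) ↔
    deg1 (MinFact.parentGraph p) = i ∧ deg2' (MinFact.parentGraph p) = j ∧
    L1len (MinFact.parentGraph p) = k
  rw [h1, h2, h3]
end
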